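/- arXiv:1508.03086 — 2 statements merged into one kernel-verified Lean document; each statement's English description precedes it below -/
import Mathlib

section
/- Let R be a symmetric quantum nilpotent algebra of dimension N over a field K satisfying conditions (A) and (B), with canonical homogeneous prime elements y_1, …, y_N, bicharacter Ω, vectors ē_k, and exchangeable index set ex := {k ∈ [1,N] : s(k) ≠ +∞}. Then there exists a unique matrix B̃ = (b_{lk}) ∈ M_{N × ex}(ℤ) whose columns satisfy: (i) Ω(Σ_{l=1}^N b_{lk} ē_l, ē_n) = λ*_n if k = n and = 1 if k ≠ n, for all k ∈ ex and n ∈ [1,N]; and (ii) the products y_1^{b_{1k}} ⋯ y_N^{b_{Nk}} are fixed under H for all k ∈ ex. -/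
open scoped BigOperators

noncomputable section

universe u v

/-- The group of `K`-points of a split torus of rank `r`. -/
abbrev Torus (K : Type u) [Field K] (r : ℕ) : Type u := Fin r → Kˣ

section Core

variable (K : Type u) [Field K] {R : Type v} [Ring R] [Algebra K R] {r N : ℕ}

/-- `a` is an eigenvector of the torus action `act` with (integral) character `f`. -/
def IsEigenWith (act : Torus K r →* (R ≃ₐ[K] R)) (f : Fin r → ℤ) (a : R) : Prop :=
  ∀ ξ : Torus K r, act ξ a = ((∏ i, ξ i ^ f i : Kˣ) : K) • a

/-- The torus action `act` is rational: every element is a finite sum of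
eigenvectors whose eigenvalues are given by integral characters of the torus. -/
def IsRationalAction (act : Torus K r →* (R ≃ₐ[K] R)) : Prop :=
  ∀ a : R, ∃ (s : Finset (Fin r → ℤ)) (c : (Fin r → ℤ) → R),
    a = ∑ f ∈ s, c f ∧ ∀ f ∈ s, IsEigenWith K act f (c f)

/-- The ordered monomial `x 0 ^ m 0 * x 1 ^ m 1 * ⋯ * x (N-1) ^ m (N-1)`. -/
def ordMonomial (x : Fin N → R) (m : Fin N → ℕ) : R :=
  ((List.finRange N).map fun k => x k ^ m k).prod

/-- The ordered monomial in the reversed order of the generators. -/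
def revOrdMonomial (x : Fin N → R) (m : Fin N → ℕ) : R :=
  ((List.finRange N).reverse.map fun k => x k ^ m k).prod

/-- The subalgebra generated by the first `m` of the elements `x 0, …, x (N-1)`. -/
def Rsub (x : Fin N → R) (m : ℕ) : Subalgebra K R :=
  Algebra.adjoin K (x '' {l : Fin N | (l : ℕ) < m})

/-- The subalgebra generated by the elements `x l` with `m < l` (for the reversed order). -/
def RsubRev (x : Fin N → R) (m : ℕ) : Subalgebra K R :=
  Algebra.adjoin K (x '' {l : Fin N | m < (l : ℕ)})

/-- The skew derivation `δ_k : a ↦ x_k a − (h_k · a) x_k` attached to the `k`-th generator. -/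
def skewDelta (act : Torus K r →* (R ≃ₐ[K] R)) (x : Fin N → R) (h : Fin N → Torus K r)
    (k : Fin N) : R → R :=
  fun a => x k * a - act (h k) a * x k

end Core

/-- A quantum nilpotent algebra (CGL extension) of dimension `N`:  an iterated skew
polynomial extension `R = K[x_1][x_2; σ_2, δ_2]⋯[x_N; σ_N, δ_N]` equipped with a rational
action of a torus `H = (Kˣ)^r` by `K`-algebra automorphisms such that the `x_k` are
`H`-eigenvectors, each `δ_k` is a locally nilpotent `σ_k`-derivation of the subalgebra
generated by `x_1, …, x_{k-1}`, and each `σ_k` is given by the action of a torus element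
`h_k` whose eigenvalue `λ_k` on `x_k` is not a root of unity.  The iterated skew polynomial
presentation is encoded by the generation, linear independence of ordered monomials
(PBW basis) and the skew commutation conditions. -/
structure QNA (K : Type u) [Field K] (R : Type v) [Ring R] [Algebra K R] (N r : ℕ) where
  x : Fin N → R
  act : Torus K r →* (R ≃ₐ[K] R)
  h : Fin N → Torus K r
  lam : Fin N → K
  rational : IsRationalAction K act
  gen : Algebra.adjoin K (Set.range x) = ⊤
  pbw : LinearIndependent K (ordMonomial (R := R) x)
  eigenvec : ∀ k : Fin N, ∃ f : Fin r → ℤ, IsEigenWith K act f (x k)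
  stable : ∀ k : Fin N, ∀ a ∈ Rsub K x (k : ℕ), skewDelta K act x h k a ∈ Rsub K x (k : ℕ)
  locnil : ∀ k : Fin N, ∀ a ∈ Rsub K x (k : ℕ), ∃ n : ℕ, (skewDelta K act x h k)^[n] a = 0
  hx : ∀ k, act (h k) (x k) = lam k • x k
  lam_not_root : ∀ k, ∀ n : ℕ, n ≠ 0 → lam k ^ n ≠ 1

/-- A symmetric quantum nilpotent algebra: a quantum nilpotent algebra which admits an
iterated skew polynomial presentation, satisfying the same axioms, also for the reversed
order `x_N, x_{N-1}, …, x_1` of the generators, with respect to torus elements `h*_k`. -/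
structure SymQNA (K : Type u) [Field K] (R : Type v) [Ring R] [Algebra K R] (N r : ℕ)
    extends QNA K R N r where
  hstar : Fin N → Torus K r
  lamstar : Fin N → K
  pbwRev : LinearIndependent K (revOrdMonomial (R := R) x)
  stableRev : ∀ k : Fin N, ∀ a ∈ RsubRev K x (k : ℕ),
    skewDelta K act x hstar k a ∈ RsubRev K x (k : ℕ)
  locnilRev : ∀ k : Fin N, ∀ a ∈ RsubRev K x (k : ℕ),
    ∃ n : ℕ, (skewDelta K act x hstar k)^[n] a = 0
  hxstar : ∀ k, act (hstar k) (x k) = lamstar k • x k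
  lamstar_not_root : ∀ k, ∀ n : ℕ, n ≠ 0 → lamstar k ^ n ≠ 1

section Prime

variable (K : Type u) [Field K] {R : Type v} [Ring R] [Algebra K R] {r N : ℕ}

/-- The skew derivation `δ_k` of the `k`-th step of the presentation vanishes. -/
def deltaZero (Q : QNA K R N r) (k : Fin N) : Prop :=
  ∀ a ∈ Rsub K Q.x (k : ℕ), skewDelta K Q.act Q.x Q.h k a = 0

/-- `p` is a prime element of the subalgebra `A`:  `p` is a nonzero noninvertible normal
element of `A` (`pA = Ap`) such that `A/Ap` is a domain. -/
def IsPrimeIn (A : Subalgebra K R) (p : R) : Prop :=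
  p ∈ A ∧ p ≠ 0 ∧ (¬ ∃ u ∈ A, p * u = 1 ∧ u * p = 1) ∧
  (∀ a ∈ A, ∃ b ∈ A, a * p = p * b) ∧
  (∀ a ∈ A, ∃ b ∈ A, p * a = b * p) ∧
  (∀ a ∈ A, ∀ b ∈ A, (∃ d ∈ A, a * b = p * d) → (∃ d ∈ A, a = p * d) ∨ (∃ d ∈ A, b = p * d))

/-- The predecessor function of the level sets of `η`:  `p(k)` is the largest `l < k`
with `η l = η k`, and `⊥` (i.e. `−∞`) if there is no such `l`. -/
def predIdx {α : Type*} [DecidableEq α] (η : Fin N → α) (k : Fin N) : WithBot (Fin N) :=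
  (Finset.univ.filter fun l => l < k ∧ η l = η k).max

/-- The successor function of the level sets of `η`:  `s(k)` is the smallest `l > k`
with `η l = η k`, and `⊤` (i.e. `+∞`) if there is no such `l`. -/
def succIdx {α : Type*} [DecidableEq α] (η : Fin N → α) (k : Fin N) : WithTop (Fin N) :=
  (Finset.univ.filter fun l => k < l ∧ η l = η k).min

/-- `(η, c, y)` is a sequence of homogeneous prime elements for the quantum nilpotent
algebra `Q` in the sense of the prime element theorem:  `y` is defined by the recursion
`y_k = y_{p(k)} x_k − c_k` (if `δ_k ≠ 0`; `y_k = x_k` if `δ_k = 0`), the `y_k` are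
`H`-eigenvectors, and for every `k` the homogeneous prime elements of the subalgebra
`R_k` generated by `x_1, …, x_k` are precisely the nonzero scalar multiples of the
`y_l` with `l ≤ k` and `s(l) > k`. -/
structure IsPrimeSeq (Q : QNA K R N r) (η : Fin N → ℤ) (c : Fin N → R) (y : Fin N → R) :
    Prop where
  c_mem : ∀ k : Fin N, ¬ deltaZero K Q k → c k ∈ Rsub K Q.x (k : ℕ)
  rec_delta_zero : ∀ k : Fin N, deltaZero K Q k → y k = Q.x k
  rec_delta_ne : ∀ k : Fin N, ¬ deltaZero K Q k →
    y k = (WithBot.recBotCoe (1 : R) (fun l => y l) (predIdx η k)) * Q.x k - c k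
  homog : ∀ k : Fin N, ∃ f : Fin r → ℤ, IsEigenWith K Q.act f (y k)
  prime_iff : ∀ k : Fin N, ∀ u : R,
    (IsPrimeIn K (Rsub K Q.x ((k : ℕ) + 1)) u ∧ ∃ f : Fin r → ℤ, IsEigenWith K Q.act f u) ↔
    (∃ l : Fin N, l ≤ k ∧ (∀ l' : Fin N, l < l' → l' ≤ k → η l' ≠ η l) ∧
      ∃ t : Kˣ, u = (t : K) • y l)

/-- The vector `ē_k = e_k + e_{p(k)} + e_{p²(k)} + ⋯ ∈ ℤ^N`. -/
def ebar (η : Fin N → ℤ) (k : Fin N) : Fin N → ℤ :=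
  fun l => if l ≤ k ∧ η l = η k then 1 else 0

/-- The multiplicatively skewsymmetric matrix of eigenvalues:  `1` on the diagonal,
`λ_{kl}` below it and `λ_{lk}⁻¹` above it. -/
def omegaEntry (lam2 : Fin N → Fin N → Kˣ) (k l : Fin N) : Kˣ :=
  if k = l then 1 else if l < k then lam2 k l else (lam2 l k)⁻¹

/-- The unique group bicharacter `Ω : ℤ^N × ℤ^N → Kˣ` with `Ω(e_k, e_l)` equal to `1`,
`λ_{kl}`, `λ_{lk}⁻¹` according as `k = l`, `k > l`, `k < l`. -/
def Omega (lam2 : Fin N → Fin N → Kˣ) (f g : Fin N → ℤ) : Kˣ :=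
  ∏ k, ∏ l, (omegaEntry K lam2 k l) ^ (f k * g l)

/-- The set of exchangeable indices: those `k` with `s(k) ≠ +∞`. -/
def exSet (η : Fin N → ℤ) : Finset (Fin N) :=
  Finset.univ.filter fun k => ∃ l, k < l ∧ η l = η k

/-- Condition (A): `K` contains square roots of the scalars `λ_{kl}` such that the
subgroup of `Kˣ` generated by all of them contains no elements of order 2. -/
def CondA (lam2 : Fin N → Fin N → Kˣ) : Prop :=
  ∃ sq : Fin N → Fin N → Kˣ, (∀ k l : Fin N, l < k → sq k l ^ 2 = lam2 k l) ∧
    ∀ g ∈ Subgroup.closure {u : Kˣ | ∃ k l : Fin N, l < k ∧ u = sq k l}, g ^ 2 = 1 → g = 1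

/-- Condition (B): there exist positive integers `d_n`, `n ∈ range η`, such that
`(λ*_k)^{d_{η(l)}} = (λ*_l)^{d_{η(k)}}` for all exchangeable `k, l`. -/
def CondB (η : Fin N → ℤ) (lamstar : Fin N → K) : Prop :=
  ∃ d : ℤ → ℕ, (∀ n ∈ Set.range η, 0 < d n) ∧
    ∀ k ∈ exSet η, ∀ l ∈ exSet η, lamstar k ^ d (η l) = lamstar l ^ d (η k)

/-- The defining conditions for the exchange matrix `B̃ ∈ M_{N×ex}(ℤ)`:  columns indexed
outside `ex` vanish; `Ω(Σ_l b_{lk} ē_l, ē_n)` equals `λ*_n` for `k = n` and `1` otherwise;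
and the products `y_1^{b_{1k}} ⋯ y_N^{b_{Nk}}` are fixed under `H`, i.e. the characters
`χ_{y_l}` of the `y_l` satisfy `Σ_l b_{lk} χ_{y_l} = 0`. -/
def IsExchangeMatrix (lam2 : Fin N → Fin N → Kˣ) (η : Fin N → ℤ) (lamstar : Fin N → K)
    (chiy : Fin N → Fin r → ℤ) (B : Fin N → Fin N → ℤ) : Prop :=
  (∀ k : Fin N, k ∉ exSet η → ∀ l, B l k = 0) ∧
  (∀ k ∈ exSet η, ∀ n : Fin N,
    ((Omega K lam2 (fun j => ∑ l, B l k * ebar η l j) (ebar η n) : Kˣ) : K) =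
      (if k = n then lamstar n else 1)) ∧
  (∀ k ∈ exSet η, ∀ i : Fin r, (∑ l, B l k * chiy l i) = 0)

/-- `ι : R →ₐ[K] D` realizes the division ring `D` as the division ring of fractions
`Fract R`:  `ι` is injective and every element of `D` is a right fraction `ι(a) ι(b)⁻¹`. -/
def IsFractionEmb {D : Type v} [DivisionRing D] [Algebra K D] (ι : R →ₐ[K] D) : Prop :=
  Function.Injective ι ∧ ∀ d : D, ∃ a b : R, b ≠ 0 ∧ d * ι b = ι a

end Prime
section Comb

variable {K : Type u} [Field K] {N r : ℕ}

def om (lam2 : Fin N → Fin N → Kˣ) (f : Fin N → ℤ) (n : Fin N) : Kˣ :=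
  ∏ k, omegaEntry K lam2 k n ^ f k

lemma Omega_eq (lam2 : Fin N → Fin N → Kˣ) (f g : Fin N → ℤ) :
    Omega K lam2 f g = ∏ n, om lam2 f n ^ g n := by
  unfold Omega om
  rw [Finset.prod_comm]
  refine Finset.prod_congr rfl fun n _ => ?_
  rw [← Finset.prod_zpow]
  refine Finset.prod_congr rfl fun k _ => ?_
  rw [zpow_mul]

lemma om_add (lam2 : Fin N → Fin N → Kˣ) (f g : Fin N → ℤ) (n : Fin N) :
    om lam2 (f + g) n = om lam2 f n * om lam2 g n := by
  simp [om, zpow_add, Finset.prod_mul_distrib]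

lemma om_sub (lam2 : Fin N → Fin N → Kˣ) (f g : Fin N → ℤ) (n : Fin N) :
    om lam2 (f - g) n = om lam2 f n * (om lam2 g n)⁻¹ := by
  simp [om, zpow_sub, Finset.prod_mul_distrib]

lemma omegaEntry_swap (lam2 : Fin N → Fin N → Kˣ) (k l : Fin N) :
    omegaEntry K lam2 k l * omegaEntry K lam2 l k = 1 := by
  unfold omegaEntry
  rcases lt_trichotomy k l with h | h | h
  · simp [h.ne, h.ne', h, h.not_gt]
  · simp [h]
  · simp [h.ne, h.ne', h, h.not_gt]

lemma Omega_self (lam2 : Fin N → Fin N → Kˣ) (f : Fin N → ℤ) : Omega K lam2 f f = 1 := by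
  unfold Omega
  rw [← Finset.prod_product']
  refine Finset.prod_involution (fun a _ => (a.2, a.1)) ?_ ?_ ?_ ?_
  · rintro ⟨a, b⟩ _
    simp only
    rw [mul_comm (f b), ← mul_zpow, omegaEntry_swap, one_zpow]
  · rintro ⟨a, b⟩ _ h h2
    simp only [Prod.mk.injEq] at h2
    apply h
    simp [h2.1, omegaEntry]
  · simp
  · simp

/-- `k` is the predecessor of `s`. -/
def IsPr (η : Fin N → ℤ) (k s : Fin N) : Prop :=
  k < s ∧ η k = η s ∧ ∀ j, k < j → j < s → η j ≠ η s

lemma exists_succ (η : Fin N → ℤ) {k s' : Fin N} (h : k < s') (he : η s' = η k) :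
    ∃ s, IsPr η k s ∧ s ≤ s' := by
  classical
  let T := Finset.univ.filter fun l => k < l ∧ η l = η k
  have hT : T.Nonempty := ⟨s', by simp [T, h, he]⟩
  have h1 := T.min'_mem hT
  simp only [T, Finset.mem_filter, Finset.mem_univ, true_and] at h1
  refine ⟨T.min' hT, ⟨h1.1, h1.2.symm, fun j hj hj2 h3 => ?_⟩, T.min'_le _ (by simp [T, h, he])⟩
  exact absurd (T.min'_le j (by simp [T, hj, h3, h1.2])) (not_le.2 hj2)

lemma ebar_or (η : Fin N → ℤ) (n : Fin N) :
    (∃ k, IsPr η k n ∧ ebar η n = ebar η k + Pi.single n 1) ∨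
    ((∀ k, k < n → η k ≠ η n) ∧ ebar η n = Pi.single n 1) := by
  classical
  by_cases h : ∃ k, k < n ∧ η k = η n
  · left
    let T := Finset.univ.filter fun l => l < n ∧ η l = η n
    have hT : T.Nonempty := by
      obtain ⟨k, hk⟩ := h
      exact ⟨k, by simp [T, hk]⟩
    have h1 := T.max'_mem hT
    have h2 : ∀ j ∈ T, j ≤ T.max' hT := fun j hj => T.le_max' j hj
    generalize T.max' hT = k at h1 h2
    simp only [T, Finset.mem_filter, Finset.mem_univ, true_and] at h1 h2
    refine ⟨k, ⟨h1.1, h1.2, fun j hj hj2 h3 => ?_⟩, ?_⟩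
    · exact absurd (h2 j ⟨hj2, h3⟩) (not_le.2 hj)
    · funext j
      simp only [ebar, Pi.add_apply, Pi.single_apply, h1.2]
      rcases lt_trichotomy j n with hj | hj | hj
      · by_cases he : η j = η n
        · simp [hj.le, he, hj.ne, h2 j ⟨hj, he⟩]
        · simp [he, hj.ne]
      · subst hj
        simp [h1.1]
      · simp [hj.ne', hj.not_ge, (h1.1.trans hj).not_ge]
  · right
    push Not at h
    refine ⟨h, ?_⟩
    funext j
    simp only [ebar, Pi.single_apply]
    rcases lt_trichotomy j n with hj | hj | hj
    · simp [h j hj, hj.ne]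
    · simp [hj]
    · simp [hj.ne', hj.not_ge]

lemma om_eq_one_of_Omega (lam2 : Fin N → Fin N → Kˣ) (η : Fin N → ℤ) (f : Fin N → ℤ)
    (h : ∀ n, Omega K lam2 f (ebar η n) = 1) (n : Fin N) : om lam2 f n = 1 := by
  rcases ebar_or η n with ⟨k, -, h2⟩ | ⟨-, h2⟩
  · have h3 := h n
    have h4 := h k
    rw [h2, Omega_eq] at h3
    rw [Omega_eq] at h4
    simp only [Pi.add_apply, zpow_add, Finset.prod_mul_distrib, h4, one_mul] at h3
    simpa [Pi.single_apply] using h3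
  · have h3 := h n
    rw [h2, Omega_eq] at h3
    simpa [Pi.single_apply] using h3

/-- every integral vector is a combination of the `ebar`. -/
lemma ebar_span (η : Fin N → ℤ) (f : Fin N → ℤ) :
    ∃ b : Fin N → ℤ, ∀ j, ∑ l, b l * ebar η l j = f j := by
  classical
  let P : Submodule ℤ (Fin N → ℤ) := Submodule.span ℤ (Set.range (ebar η))
  have h1 : ∀ n, (Pi.single n 1 : Fin N → ℤ) ∈ P := by
    intro n
    rcases ebar_or η n with ⟨k, -, h2⟩ | ⟨-, h2⟩
    · have : (Pi.single n 1 : Fin N → ℤ) = ebar η n - ebar η k := by rw [h2]; abel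
      rw [this]
      exact P.sub_mem (Submodule.subset_span ⟨n, rfl⟩) (Submodule.subset_span ⟨k, rfl⟩)
    · rw [← h2]
      exact Submodule.subset_span ⟨n, rfl⟩
  have h2 : f ∈ P := by
    have : f = ∑ n, f n • (Pi.single n 1 : Fin N → ℤ) := by
      funext j
      simp [Finset.sum_apply, Pi.single_apply]
    rw [this]
    exact P.sum_mem fun n _ => P.smul_mem _ (h1 n)
  obtain ⟨b, hb⟩ := (Submodule.mem_span_range_iff_exists_fun ℤ).1 h2
  refine ⟨b, fun j => ?_⟩
  rw [← hb]
  simp [Finset.sum_apply]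

lemma ebar_inj (η : Fin N → ℤ) (b : Fin N → ℤ) (h : ∀ j, ∑ l, b l * ebar η l j = 0) : b = 0 := by
  by_contra hb
  obtain ⟨i, hi⟩ := Function.ne_iff.1 hb
  let T := Finset.univ.filter fun l => b l ≠ 0
  have hT : T.Nonempty := ⟨i, by simpa [T] using hi⟩
  have h1 := T.max'_mem hT
  have h2 : ∀ j ∈ T, j ≤ T.max' hT := fun j hj => T.le_max' j hj
  generalize T.max' hT = k at h1 h2
  simp only [T, Finset.mem_filter, Finset.mem_univ, true_and] at h1 h2
  have h3 := h k
  rw [Finset.sum_eq_single k] at h3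
  · simp [ebar] at h3
    exact h1 h3
  · intro j _ hj
    by_cases hb : b j = 0
    · simp [hb]
    · have := lt_of_le_of_ne (h2 j hb) hj
      simp [ebar, this.not_ge]
  · simp

/-- first index where nonzero -/
lemma exists_first (f : Fin N → ℤ) {l : Fin N} (hl : f l ≠ 0) :
    ∃ m, m ≤ l ∧ f m ≠ 0 ∧ ∀ j, j < m → f j = 0 := by
  let T := Finset.univ.filter fun l => f l ≠ 0
  have hT : T.Nonempty := ⟨l, by simpa [T] using hl⟩
  have h1 := T.min'_mem hT
  have h2 : ∀ j ∈ T, T.min' hT ≤ j := fun j hj => T.min'_le j hj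
  generalize T.min' hT = k at h1 h2
  simp only [T, Finset.mem_filter, Finset.mem_univ, true_and] at h1 h2
  exact ⟨k, h2 l hl, h1, fun j hj => by
    by_contra h
    exact absurd (h2 j h) (not_le.2 hj)⟩

lemma exists_last (f : Fin N → ℤ) (hf : f ≠ 0) :
    ∃ m, f m ≠ 0 ∧ ∀ j, m < j → f j = 0 := by
  obtain ⟨l, hl⟩ := Function.ne_iff.1 hf
  let T := Finset.univ.filter fun l => f l ≠ 0
  have hT : T.Nonempty := ⟨l, by simpa [T] using hl⟩
  have h1 := T.max'_mem hT
  have h2 : ∀ j ∈ T, j ≤ T.max' hT := fun j hj => T.le_max' j hj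
  generalize T.max' hT = k at h1 h2
  simp only [T, Finset.mem_filter, Finset.mem_univ, true_and] at h1 h2
  exact ⟨k, h1, fun j hj => by
    by_contra h
    exact absurd (h2 j h) (not_le.2 hj)⟩

/-- the total weight of `f` -/
def wt (X : Fin N → Fin r → ℤ) (f : Fin N → ℤ) : Fin r → ℤ := fun i => ∑ j, f j * X j i

lemma wt_sub (X : Fin N → Fin r → ℤ) (f g : Fin N → ℤ) : wt X (f - g) = wt X f - wt X g := by
  funext i
  simp [wt, sub_mul]

structure Data (lam2 : Fin N → Fin N → Kˣ) (η : Fin N → ℤ) (lam lamstar : Fin N → Kˣ)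
    (X : Fin N → Fin r → ℤ) : Prop where
  lam_nr : ∀ k (n : ℤ), lam k ^ n = 1 → n = 0
  lamstar_nr : ∀ k (n : ℤ), lamstar k ^ n = 1 → n = 0
  F1 : ∀ f m, wt X f = 0 → (∀ j, m < j → f j = 0) → om lam2 f m = lam m ^ f m
  F2 : ∀ f m, wt X f = 0 → (∀ j, j < m → f j = 0) → om lam2 f m = lamstar m ^ f m
  F3 : ∀ k s, IsPr η k s → ∃ w : Fin N → ℤ, (∀ j, 0 ≤ w j) ∧ (∀ j, s ≤ j → w j = 0) ∧
    wt X w = wt X (ebar η s) ∧ (∃ l, w l < ebar η k l) ∧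
    ∀ n < s, (∃ l, (w + (Pi.single n 1 : Fin N → ℤ)) l < ebar η k l) → om lam2 w n = om lam2 (ebar η s) n

structure Good (lam2 : Fin N → Fin N → Kˣ) (η : Fin N → ℤ) (lam lamstar : Fin N → Kˣ)
    (X : Fin N → Fin r → ℤ) (l s : Fin N) (f : Fin N → ℤ) : Prop where
  lt : l < s
  eta : η l = η s
  wt0 : wt X f = 0
  lo : ∀ j, j < l → f j = 0
  hi : ∀ j, s < j → f j = 0
  fl : f l = 1
  fs : f s = 1
  neg : ∀ j, l < j → j < s → η j = η s → f j ≤ 0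
  om1 : ∀ n, n ≠ l → n ≠ s → om lam2 f n = 1
  oml : om lam2 f l = lamstar l
  oms : om lam2 f s = (lamstar l)⁻¹

lemma Data.good {lam2 : Fin N → Fin N → Kˣ} {η : Fin N → ℤ} {lam lamstar : Fin N → Kˣ}
    {X : Fin N → Fin r → ℤ} (D : Data lam2 η lam lamstar X) {k s : Fin N} (hks : IsPr η k s) :
    ∃ l f, Good lam2 η lam lamstar X l s f := by
  classical
  obtain ⟨w, w0, ws, wwt, ⟨l, hl⟩, hw⟩ := D.F3 k s hks
  obtain ⟨hk1, hk2, hk3⟩ := hks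
  have key : ∀ l, w l < ebar η k l → l ≤ k ∧ η l = η k ∧ w l = 0 := by
    intro l hl
    have := w0 l
    unfold ebar at hl
    split_ifs at hl with h
    · exact ⟨h.1, h.2, by omega⟩
    · omega
  obtain ⟨hlk, hle, hl0⟩ := key l hl
  set f := ebar η s - w with hf
  have hls : l < s := hlk.trans_lt hk1
  have hwt : wt X f = 0 := by rw [hf, wt_sub, wwt, sub_self]
  have hhi : ∀ j, s < j → f j = 0 := by
    intro j hj
    simp [hf, ebar, hj.not_ge, ws j hj.le]
  have hfl : f l = 1 := by simp [hf, ebar, hls.le, hle, hk2, hl0]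
  have hfs : f s = 1 := by simp [hf, ebar, ws s le_rfl]
  have A : ∀ l, w l < ebar η k l → ∀ n, n ≠ l → n ≠ s → om lam2 f n = 1 := by
    intro l hl n hnl hns
    rcases lt_or_gt_of_ne hns with h | h
    · rw [hf, om_sub, hw n h ⟨l, ?_⟩, mul_inv_cancel]
      simpa [Pi.single_apply, hnl.symm] using hl
    · rw [D.F1 f n hwt (fun j hj => hhi j (h.trans hj)), hhi n h, zpow_zero]
  have hom1 := A l hl
  have homs : om lam2 f s = lam s := by rw [D.F1 f s hwt hhi, hfs, zpow_one]
  have hprod : om lam2 f l * om lam2 f s = 1 := by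
    have := Omega_self lam2 f
    rw [Omega_eq] at this
    rw [← this, ← Finset.prod_subset (Finset.subset_univ {l, s})]
    · rw [Finset.prod_pair hls.ne, hfl, hfs, zpow_one, zpow_one]
    · intro x _ hx
      simp only [Finset.mem_insert, Finset.mem_singleton, not_or] at hx
      rw [hom1 x hx.1 hx.2, one_zpow]
  have hnl : om lam2 f l ≠ 1 := by
    intro h
    rw [h, one_mul, homs] at hprod
    have := D.lam_nr s 1 (by rw [zpow_one, hprod])
    omega
  have hlo : ∀ j, j < l → f j = 0 := by
    obtain ⟨m, hm1, hm2, hm3⟩ := exists_first f (l := l) (by omega)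
    have h1 := D.F2 f m hwt hm3
    have : m = l := by
      by_contra hml
      rw [hom1 m hml (hm1.trans_lt hls).ne] at h1
      exact hm2 (D.lamstar_nr _ _ h1.symm)
    subst this
    exact hm3
  have hol : om lam2 f l = lamstar l := by rw [D.F2 f l hwt hlo, hfl, zpow_one]
  refine ⟨l, f, hls, hle.trans hk2, hwt, hlo, hhi, hfl, hfs, ?_, hom1, hol, ?_⟩
  · intro j hlj hjs hj
    have hjk : j ≤ k := by
      by_contra h
      exact hk3 j (not_le.1 h) hjs hj
    by_contra hneg
    have hwj : w j < ebar η k j := by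
      have : f j = ebar η s j - w j := rfl
      have h2 : ebar η s j = 1 := by simp [ebar, hjs.le, hj]
      have h3 : ebar η k j = 1 := by simp [ebar, hjk, hj, hk2]
      omega
    exact hnl (A j hwj l hlj.ne hls.ne)
  · rw [← hol]
    exact eq_inv_of_mul_eq_one_right hprod

lemma Data.good' {lam2 : Fin N → Fin N → Kˣ} {η : Fin N → ℤ} {lam lamstar : Fin N → Kˣ}
    {X : Fin N → Fin r → ℤ} (D : Data lam2 η lam lamstar X) (s : Fin N) :
    ∀ k, IsPr η k s → ∃ f, Good lam2 η lam lamstar X k s f := by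
  classical
  induction s using WellFoundedLT.induction with
  | ind s ih =>
  intro k hks
  obtain ⟨l, f, hf⟩ := D.good hks
  have hlk : l ≤ k := by
    by_contra h
    exact hks.2.2 l (not_le.1 h) hf.lt hf.eta
  rcases hlk.eq_or_lt with rfl | hlk
  · exact ⟨f, hf⟩
  exfalso
  obtain ⟨s', hs', hs'k⟩ := exists_succ η hlk (hks.2.1.trans hf.eta.symm)
  have hs's : s' < s := hs'k.trans_lt hks.1
  obtain ⟨f', hf'⟩ := ih s' hs's l hs'
  set g := f' - f with hg
  have hO := Omega_self lam2 g
  rw [Omega_eq, ← Finset.prod_subset (Finset.subset_univ {s', s}), Finset.prod_pair hs's.ne] at hO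
  · have h1 : g s = -1 := by simp [hg, hf.fs, hf'.hi s hs's]
    have h2 : 1 ≤ g s' := by
      have := hf.neg s' hs'.1 hs's (hs'.2.1.symm.trans hf.eta)
      have h3 := hf'.fs
      simp [hg]
      omega
    have h3 : om lam2 g s' = (lamstar l)⁻¹ := by
      rw [hg, om_sub, hf'.oms, hf.om1 s' hs'.1.ne' hs's.ne, inv_one, mul_one]
    have h4 : om lam2 g s = lamstar l := by
      rw [hg, om_sub, hf.oms, hf'.om1 s hf.lt.ne' hs's.ne', one_mul, inv_inv]
    rw [h3, h4, h1, inv_zpow', ← zpow_add] at hO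
    have := D.lamstar_nr _ _ hO
    omega
  · intro n _ hn
    simp only [Finset.mem_insert, Finset.mem_singleton, not_or] at hn
    rw [hg, om_sub]
    by_cases hnl : n = l
    · subst hnl
      rw [hf.oml, hf'.oml, mul_inv_cancel, one_zpow]
    · rw [hf'.om1 n hnl hn.1, hf.om1 n hnl hn.2]
      simp

theorem Data.main {lam2 : Fin N → Fin N → Kˣ} {η : Fin N → ℤ} {lam lamstar : Fin N → Kˣ}
    {X : Fin N → Fin r → ℤ} (D : Data lam2 η lam lamstar X) (chiy : Fin N → Fin r → ℤ)
    (hchi : ∀ l, chiy l = wt X (ebar η l)) (ls : Fin N → K) (hls : ∀ k, ls k = lamstar k) :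
    ∃! B : Fin N → Fin N → ℤ, IsExchangeMatrix K lam2 η ls chiy B := by
  classical
  have hwt : ∀ (b : Fin N → ℤ) i, ∑ l, b l * chiy l i = wt X (fun j => ∑ l, b l * ebar η l j) i := by
    intro b i
    simp only [hchi, wt, Finset.mul_sum, Finset.sum_mul]
    rw [Finset.sum_comm]
    simp only [mul_assoc]
  have hex : ∀ k, ∃ b : Fin N → ℤ, (k ∉ exSet η → b = 0) ∧ (k ∈ exSet η →
      (∀ n : Fin N, ((Omega K lam2 (fun j => ∑ l, b l * ebar η l j) (ebar η n) : Kˣ) : K) =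
      (if k = n then ls n else 1)) ∧ ∀ i : Fin r, (∑ l, b l * chiy l i) = 0) := by
    intro k
    by_cases hk : k ∈ exSet η
    · obtain ⟨s', hs'⟩ : ∃ l, k < l ∧ η l = η k := by simpa [exSet] using hk
      obtain ⟨s, hs, -⟩ := exists_succ η hs'.1 hs'.2
      obtain ⟨f, hf⟩ := D.good' s k hs
      obtain ⟨b, hb⟩ := ebar_span η f
      have hb' : (fun j => ∑ l, b l * ebar η l j) = f := funext hb
      refine ⟨b, fun h => absurd hk h, fun _ => ⟨fun n => ?_, fun i => ?_⟩⟩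
      · rw [hb', Omega_eq, ← Finset.prod_subset (Finset.subset_univ {k, s}),
          Finset.prod_pair hf.lt.ne, hf.oml, hf.oms]
        · split_ifs with hkn
          · subst hkn
            simp [ebar, hls, hf.lt.not_ge]
          · by_cases hkn2 : k ≤ n ∧ η k = η n
            · have : s ≤ n := by
                by_contra h
                exact hs.2.2 n (lt_of_le_of_ne hkn2.1 hkn) (not_le.1 h) (by rw [← hkn2.2, hf.eta])
              have h1 : ebar η n k = 1 := by simp [ebar, hkn2.1, hkn2.2]
              have h2 : ebar η n s = 1 := by simp [ebar, this, ← hf.eta, hkn2.2]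
              simp [h1, h2]
            · have h1 : ebar η n k = 0 := by
                unfold ebar; rw [if_neg hkn2]
              have h2 : ebar η n s = 0 := by
                unfold ebar; rw [if_neg]
                rintro ⟨h3, h4⟩
                exact hkn2 ⟨hf.lt.le.trans h3, hf.eta.trans h4⟩
              simp [h1, h2]
        · intro x _ hx
          simp only [Finset.mem_insert, Finset.mem_singleton, not_or] at hx
          rw [hf.om1 x hx.1 hx.2, one_zpow]
      · rw [hwt, hb', hf.wt0]; rfl
    · exact ⟨0, fun _ => rfl, fun h => absurd h hk⟩
  choose b hb1 hb2 using hex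
  refine ⟨fun l k => b k l, ⟨?_, ?_, ?_⟩, ?_⟩
  · intro k hk l
    simp [hb1 k hk]
  · intro k hk
    exact (hb2 k hk).1
  · intro k hk
    exact (hb2 k hk).2
  · rintro B ⟨hB1, hB2, hB3⟩
    funext l k
    by_cases hk : k ∈ exSet η
    · set d : Fin N → ℤ := fun l => B l k - b k l with hd
      suffices d = 0 by
        have := congrFun this l
        simp only [hd, Pi.zero_apply] at this
        omega
      apply ebar_inj η d
      set f : Fin N → ℤ := fun j => ∑ l, d l * ebar η l j with hf
      have hfe : f = (fun j => ∑ l, B l k * ebar η l j) - (fun j => ∑ l, b k l * ebar η l j) := by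
        funext j
        simp [hf, hd, sub_mul]
      have hw : wt X f = 0 := by
        rw [hfe, wt_sub]
        funext i
        rw [Pi.sub_apply, ← hwt, ← hwt, hB3 k hk i, (hb2 k hk).2 i]
        rfl
      have hom : ∀ n, om lam2 f n = 1 := by
        apply om_eq_one_of_Omega lam2 η
        intro n
        have h1 := hB2 k hk n
        rw [← (hb2 k hk).1 n, Units.val_inj] at h1
        rw [Omega_eq] at h1 ⊢
        rw [Omega_eq] at h1
        simp only [hfe, om_sub, mul_zpow, Finset.prod_mul_distrib, h1, inv_zpow,
          Finset.prod_inv_distrib, mul_inv_cancel]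
      suffices f = 0 from fun j => congrFun this j
      by_contra hne
      obtain ⟨m, hm1, hm2⟩ := exists_last f hne
      have := D.F1 f m hw hm2
      rw [hom m] at this
      exact hm1 (D.lam_nr _ _ this.symm)
    · simp [hB1 k hk l, hb1 k hk]

end Comb

section Straight

variable {K : Type u} [Field K] {R : Type v} [Ring R] [Algebra K R] {r N : ℕ}

/-- strict reverse lexicographic order on exponents -/
def rl (u w : Fin N → ℕ) : Prop := toColex u < toColex w

lemma rl_iff (u w : Fin N → ℕ) : rl u w ↔ ∃ i, (∀ j, i < j → u j = w j) ∧ u i < w i := Iff.rfl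

lemma rl_wf : WellFounded (rl (N := N)) :=
  InvImage.wf (r := fun a b : Colex (Fin N → ℕ) => a < b) toColex wellFounded_lt

lemma rl_trans {u v w : Fin N → ℕ} (h : rl u v) (h' : rl v w) : rl u w := lt_trans h h'

lemma rl_tri (u w : Fin N → ℕ) : rl u w ∨ u = w ∨ rl w u := lt_trichotomy (toColex u) (toColex w)

lemma rl_irrefl (u : Fin N → ℕ) : ¬ rl u u := lt_irrefl (toColex u)

lemma rl_add_right {u v : Fin N → ℕ} (w : Fin N → ℕ) (h : rl u v) : rl (u + w) (v + w) := by
  rw [rl_iff] at *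
  obtain ⟨i, h1, h2⟩ := h
  exact ⟨i, fun j hj => by simp [h1 j hj], by simpa using h2⟩

lemma rl_add_left {u v : Fin N → ℕ} (w : Fin N → ℕ) (h : rl u v) : rl (w + u) (w + v) := by
  rw [add_comm w, add_comm w]; exact rl_add_right w h

/-- supported below `n` -/
def sb (n : ℕ) (w : Fin N → ℕ) : Prop := ∀ j : Fin N, n ≤ (j : ℕ) → w j = 0

lemma sb_of_rl {n : ℕ} {u w : Fin N → ℕ} (h : rl u w) (hw : sb n w) : sb n u := by
  rw [rl_iff] at h
  obtain ⟨i, h1, h2⟩ := h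
  intro j hj
  have hi : (i : ℕ) < n := by
    by_contra hc
    rw [hw i (not_lt.1 hc)] at h2
    omega
  rw [h1 j (by rw [Fin.lt_def]; omega), hw j hj]

lemma sb.mono {m n : ℕ} {u : Fin N → ℕ} (h : sb m u) (hmn : m ≤ n) : sb n u :=
  fun j hj => h j (hmn.trans hj)

lemma sb.add {n : ℕ} {u w : Fin N → ℕ} (h : sb n u) (h' : sb n w) : sb n (u + w) :=
  fun j hj => by simp [h j hj, h' j hj]

lemma rl_of_sb {n : Fin N} {u w : Fin N → ℕ} (hu : sb (n : ℕ) u) (hw : sb ((n : ℕ) + 1) w)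
    (h : w n ≠ 0) : rl u w := by
  rw [rl_iff]
  refine ⟨n, fun j hj => ?_, ?_⟩
  · rw [Fin.lt_def] at hj
    rw [hu j hj.le, hw j hj]
  · rw [hu n le_rfl]; omega

lemma sb_single (n : Fin N) (m : ℕ) : sb ((n : ℕ) + 1) (Pi.single n m : Fin N → ℕ) := by
  intro j hj
  rw [Pi.single_apply, if_neg]
  rintro rfl
  omega

/-- abbreviation for the unit vector -/
abbrev sg (n : Fin N) : Fin N → ℕ := Pi.single n 1

lemma mon_mul (x : Fin N → R) (u w : Fin N → ℕ) (h : ∀ i j, u i ≠ 0 → w j ≠ 0 → i ≤ j) :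
    ordMonomial x u * ordMonomial x w = ordMonomial x (u + w) := by
  unfold ordMonomial
  have key : ∀ L : List (Fin N), L.Pairwise (· < ·) →
      (L.map fun k => x k ^ u k).prod * (L.map fun k => x k ^ w k).prod =
      (L.map fun k => x k ^ (u + w) k).prod := by
    intro L hL
    induction L with
    | nil => simp
    | cons a L ih =>
      rw [List.pairwise_cons] at hL
      have ih := ih hL.2
      simp only [List.map_cons, List.prod_cons, Pi.add_apply] at ih ⊢
      by_cases hw : w a = 0
      · rw [hw, pow_zero, one_mul, add_zero, mul_assoc, ih]
      · have : (L.map fun k => x k ^ u k).prod = 1 := by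
          apply List.prod_eq_one
          intro y hy
          obtain ⟨k, hk, rfl⟩ := List.mem_map.1 hy
          have : u k = 0 := by
            by_contra hu
            exact absurd (h k a hu hw) (not_le.2 (hL.1 k hk))
          rw [this, pow_zero]
        rw [this, one_mul] at ih
        rw [this, mul_one, ← ih, ← mul_assoc, ← pow_add]
  exact key _ (List.pairwise_lt_finRange N)

lemma mon_zero (x : Fin N → R) : ordMonomial x 0 = 1 := by
  simp [ordMonomial]

lemma mon_sg (x : Fin N → R) (n : Fin N) (m : ℕ) : ordMonomial x (Pi.single n m) = x n ^ m := by
  unfold ordMonomial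
  rw [List.prod_map_eq_pow_single n]
  · simp [List.count_eq_one_of_mem (List.nodup_finRange N) (List.mem_finRange n)]
  · intro a ha _
    simp [Pi.single_apply, ha]

lemma mon_mem (x : Fin N → R) (n : ℕ) (w : Fin N → ℕ) (h : sb n w) :
    ordMonomial x w ∈ Rsub K x n := by
  unfold ordMonomial
  apply Subalgebra.list_prod_mem
  intro y hy
  obtain ⟨k, hk, rfl⟩ := List.mem_map.1 hy
  by_cases hn : (k : ℕ) < n
  · exact Subalgebra.pow_mem _ (Algebra.subset_adjoin (Set.mem_image_of_mem x hn)) _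
  · rw [h k (not_lt.1 hn), pow_zero]
    exact Subalgebra.one_mem _

lemma act_mon (act : Torus K r →* (R ≃ₐ[K] R)) (x : Fin N → R) (ξ : Torus K r) (E : Fin N → Kˣ)
    (hE : ∀ k, act ξ (x k) = (E k : K) • x k) (w : Fin N → ℕ) :
    act ξ (ordMonomial x w) = ((∏ k, E k ^ w k : Kˣ) : K) • ordMonomial x w := by
  unfold ordMonomial
  rw [← List.prod_ofFn, List.ofFn_eq_map]
  induction List.finRange N with
  | nil => simp
  | cons a L ih =>
    simp only [List.map_cons, List.prod_cons, map_mul, map_pow, ih, hE, smul_pow, Units.val_mul,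
      Units.val_pow_eq_pow_val, smul_mul_smul_comm]

/-- low part -/
def lo (n : ℕ) (w : Fin N → ℕ) : Fin N → ℕ := fun k => if (k : ℕ) < n then w k else 0
/-- high part -/
def hi (n : ℕ) (w : Fin N → ℕ) : Fin N → ℕ := fun k => if (k : ℕ) < n then 0 else w k

lemma lo_add_hi (n : ℕ) (w : Fin N → ℕ) : lo n w + hi n w = w := by
  funext k; simp only [lo, hi, Pi.add_apply]; split_ifs <;> simp

lemma sb_lo (n : ℕ) (w : Fin N → ℕ) : sb n (lo n w) := fun j hj => by
  simp [lo, not_lt.2 hj]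

lemma sb_hi {m n : ℕ} {w : Fin N → ℕ} (h : sb m w) : sb m (hi n w) := fun j hj => by
  simp [hi, h j hj]

lemma lo_hi_le {n : ℕ} {u w : Fin N → ℕ} (h : sb n u) (i j : Fin N) (hu : u i ≠ 0)
    (hw : hi n w j ≠ 0) : i ≤ j := by
  have h1 : (i : ℕ) < n := by
    by_contra hc; exact hu (h i (not_lt.1 hc))
  have h2 : ¬ (j : ℕ) < n := by
    intro hc; simp [hi, hc] at hw
  rw [Fin.le_def]; omega

/-- the skew setting -/
structure Sk (x : Fin N → R) (act : Torus K r →* (R ≃ₐ[K] R)) (h : Fin N → Torus K r)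
    (q : Fin N → Fin N → Kˣ) : Prop where
  eig : ∀ i j, act (h i) (x j) = (q i j : K) • x j
  stable : ∀ k : Fin N, ∀ a ∈ Rsub K x (k : ℕ), skewDelta K act x h k a ∈ Rsub K x (k : ℕ)

variable {x : Fin N → R} {act : Torus K r →* (R ≃ₐ[K] R)} {h : Fin N → Torus K r}
  {q : Fin N → Fin N → Kˣ}

lemma Sk.left_mul (S : Sk x act h q) (n : Fin N) (w : Fin N → ℕ) :
    ∃ d ∈ Rsub K x (n : ℕ), x n * ordMonomial x w =
      ((∏ k, q n k ^ lo n w k : Kˣ) : K) • ordMonomial x (w + sg n) +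
        d * ordMonomial x (hi n w) := by
  refine ⟨_, S.stable n _ (mon_mem x n _ (sb_lo n w)), ?_⟩
  have h1 : ordMonomial x (lo n w) * ordMonomial x (hi n w) = ordMonomial x w := by
    rw [mon_mul _ _ _ (lo_hi_le (sb_lo n w)), lo_add_hi]
  have h2 : x n * ordMonomial x (hi n w) = ordMonomial x (sg n + hi n w) := by
    rw [← mon_mul, mon_sg, pow_one]
    intro i j hi' hj
    have : i = n := by
      by_contra hc; simp [Pi.single_apply, hc] at hi'
    subst this
    simp only [hi] at hj
    rw [Fin.le_def]
    split_ifs at hj <;> omega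
  have h3 : ordMonomial x (lo n w) * ordMonomial x (sg n + hi n w) = ordMonomial x (w + sg n) := by
    rw [mon_mul]
    · rw [add_comm (sg n), ← add_assoc, lo_add_hi]
    · intro i j hi' hj
      by_contra hc
      have h5 : (i : ℕ) < n := by
        by_contra hc2; simp [lo, hc2] at hi'
      have h6 : (j : ℕ) < n := by rw [Fin.le_def] at hc; omega
      have h7 : j ≠ n := by rintro rfl; omega
      simp [hi, h6, h7] at hj
  unfold skewDelta
  rw [act_mon act x (h n) (q n) (S.eig n), sub_mul, ← h1, ← mul_assoc, smul_mul_assoc,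
    smul_mul_assoc, mul_assoc _ (x n), h2, h3]
  abel

lemma Sk.span (S : Sk x act h q) (n : ℕ) : ∀ a ∈ Rsub K x n,
    a ∈ Submodule.span K (ordMonomial x '' {w | sb n w}) := by
  induction n using Nat.strong_induction_on with
  | _ n ih =>
  intro a ha
  have key : ∀ b ∈ Rsub K x n, ∀ c ∈ Submodule.span K (ordMonomial x '' {w | sb n w}),
      b * c ∈ Submodule.span K (ordMonomial x '' {w | sb n w}) := by
    intro b hb
    refine Algebra.adjoin_induction ?_ ?_ ?_ ?_ hb
    · rintro _ ⟨j, hj, rfl⟩ c hc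
      simp only [Set.mem_ofPred_eq] at hj
      refine Submodule.span_induction ?_ ?_ ?_ ?_ hc
      · rintro _ ⟨w, hw, rfl⟩
        obtain ⟨d, hd, he⟩ := S.left_mul j w
        rw [he]
        refine Submodule.add_mem _ (Submodule.smul_mem _ _ (Submodule.subset_span ⟨_, ?_, rfl⟩)) ?_
        · exact sb.add hw ((sb_single j 1).mono hj)
        · have := ih j hj d hd
          refine Submodule.span_induction ?_ ?_ ?_ ?_ this
          · rintro _ ⟨v, hv, rfl⟩
            rw [mon_mul _ _ _ (lo_hi_le hv)]
            exact Submodule.subset_span ⟨_, (hv.mono hj.le).add (sb_hi hw), rfl⟩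
          · rw [zero_mul]; exact Submodule.zero_mem _
          · intro y z _ _ hy hz
            rw [add_mul]; exact Submodule.add_mem _ hy hz
          · intro t y _ hy
            rw [smul_mul_assoc]; exact Submodule.smul_mem _ _ hy
      · rw [mul_zero]; exact Submodule.zero_mem _
      · intro y z _ _ hy hz
        rw [mul_add]; exact Submodule.add_mem _ hy hz
      · intro t y _ hy
        rw [mul_smul_comm]; exact Submodule.smul_mem _ _ hy
    · intro t c hc
      rw [← Algebra.smul_def]; exact Submodule.smul_mem _ _ hc
    · intro y z _ _ hy hz c hc
      rw [add_mul]; exact Submodule.add_mem _ (hy c hc) (hz c hc)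
    · intro y z _ _ hy hz c hc
      rw [mul_assoc]; exact hy _ (hz c hc)
  have := key a ha 1 (Submodule.subset_span ⟨0, fun _ _ => rfl, mon_zero x⟩)
  rwa [mul_one] at this

/-- span of lower monomials -/
def Low (x : Fin N → R) (w : Fin N → ℕ) : Submodule K R :=
  Submodule.span K (ordMonomial x '' {u | rl u w})

/-- `a` has leading term `α x^w` (with `α = 0` permitted) -/
def Ld (x : Fin N → R) (a : R) (α : K) (w : Fin N → ℕ) : Prop :=
  a - α • ordMonomial x w ∈ Low (K := K) x w

lemma Ld_mon (w : Fin N → ℕ) : Ld x (ordMonomial x w) (1 : K) w := by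
  unfold Ld; rw [one_smul, sub_self]; exact Submodule.zero_mem _

lemma Ld.add {a b : R} {α β : K} {w : Fin N → ℕ} (ha : Ld x a α w) (hb : Ld x b β w) :
    Ld x (a + b) (α + β) w := by
  unfold Ld at *
  have := Submodule.add_mem _ ha hb
  rw [add_smul]
  convert this using 1
  abel

lemma Ld.smul {a : R} {α : K} {w : Fin N → ℕ} (t : K) (ha : Ld x a α w) :
    Ld x (t • a) (t * α) w := by
  unfold Ld at *
  have := Submodule.smul_mem _ t ha
  rwa [smul_sub, smul_smul] at this

lemma Ld.neg {a : R} {α : K} {w : Fin N → ℕ} (ha : Ld x a α w) : Ld x (-a) (-α) w := by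
  have := ha.smul (-1)
  simpa using this

lemma Ld.sub {a b : R} {α β : K} {w : Fin N → ℕ} (ha : Ld x a α w) (hb : Ld x b β w) :
    Ld x (a - b) (α - β) w := by
  rw [sub_eq_add_neg, sub_eq_add_neg]; exact ha.add hb.neg

lemma Ld_of_low {a : R} {w : Fin N → ℕ} (ha : a ∈ Low (K := K) x w) : Ld x a (0 : K) w := by
  unfold Ld; rwa [zero_smul, sub_zero]

lemma Ld.low {a : R} {w : Fin N → ℕ} (ha : Ld x a (0 : K) w) : a ∈ Low (K := K) x w := by
  unfold Ld at ha; rwa [zero_smul, sub_zero] at ha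

lemma Low_mono {u w : Fin N → ℕ} (h : rl u w) : Low (K := K) x u ≤ Low x w :=
  Submodule.span_mono (Set.image_mono fun _ hv => rl_trans hv h)

lemma Ld.mem_low {a : R} {α : K} {u w : Fin N → ℕ} (ha : Ld x a α u) (h : rl u w) :
    a ∈ Low (K := K) x w := by
  have h1 := Low_mono h ha
  have h2 : α • ordMonomial x u ∈ Low (K := K) x w :=
    Submodule.smul_mem _ _ (Submodule.subset_span ⟨u, h, rfl⟩)
  have := Submodule.add_mem _ h1 h2
  rwa [sub_add_cancel] at this

lemma Ld.lift {a : R} {α : K} {u w : Fin N → ℕ} (ha : Ld x a α u) (h : rl u w) :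
    Ld x a (0 : K) w := Ld_of_low (ha.mem_low h)

lemma Ld.coeff_eq (P : LinearIndependent K (ordMonomial (R := R) x)) {a : R} {α β : K}
    {w : Fin N → ℕ} (ha : Ld x a α w) (hb : Ld x a β w) : α = β := by
  have h := (ha.sub hb)
  rw [sub_self] at h
  have h1 : (α - β) • ordMonomial x w ∈ Low (K := K) x w := by
    unfold Ld at h
    rw [zero_sub] at h
    exact (Submodule.neg_mem_iff _).1 h
  by_contra hne
  have h2 : ordMonomial x w ∈ Low (K := K) x w := by
    have := Submodule.smul_mem _ (α - β)⁻¹ h1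
    rwa [smul_smul, inv_mul_cancel₀ (sub_ne_zero.2 hne), one_smul] at this
  exact P.notMem_span_image (s := {u | rl u w}) (x := w) (rl_irrefl w) h2

lemma Ld.exp_eq (P : LinearIndependent K (ordMonomial (R := R) x)) {a : R} {α β : K}
    {u w : Fin N → ℕ} (ha : Ld x a α u) (hb : Ld x a β w) (h1 : α ≠ 0) (h2 : β ≠ 0) : u = w := by
  rcases rl_tri u w with h | h | h
  · exact absurd (hb.coeff_eq P (ha.lift h)) h2
  · exact h
  · exact absurd (ha.coeff_eq P (hb.lift h)) h1

lemma Ld.ne_zero (P : LinearIndependent K (ordMonomial (R := R) x)) {a : R} {α : K}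
    {w : Fin N → ℕ} (ha : Ld x a α w) (h : α ≠ 0) : a ≠ 0 := by
  rintro rfl
  exact h (ha.coeff_eq P (Ld_of_low (Submodule.zero_mem _)))

lemma Ld.mem_Rsub {a : R} {α : K} {w : Fin N → ℕ} (ha : Ld x a α w) {n : ℕ} (hw : sb n w) :
    a ∈ Rsub K x n := by
  have h1 : Low (K := K) x w ≤ Subalgebra.toSubmodule (Rsub K x n) := by
    unfold Low
    rw [Submodule.span_le]
    rintro _ ⟨u, hu, rfl⟩
    exact mon_mem x n u (sb_of_rl hu hw)
  have h2 : a - α • ordMonomial x w ∈ Rsub K x n := h1 ha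
  have h3 := Subalgebra.smul_mem _ (mon_mem (K := K) x n w hw) α
  have := Subalgebra.add_mem _ h2 h3
  rwa [sub_add_cancel] at this

lemma exists_Ld_gen {ι : Type*} (g : ι → R) (e : ι → Fin N → ℕ) (he : Function.Injective e)
    (α : ι → K) (hα : ∀ i, α i ≠ 0) (hg : ∀ i, Ld x (g i) (α i) (e i)) (T : Set ι) (a : R)
    (ha : a ∈ Submodule.span K (g '' T)) (ha0 : a ≠ 0) :
    ∃ i ∈ T, ∃ β : K, β ≠ 0 ∧ Ld x a β (e i) := by
  classical
  obtain ⟨l, hl, rfl⟩ := (Finsupp.mem_span_image_iff_linearCombination K).1 ha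
  have hne : l.support.Nonempty := by
    rw [Finsupp.support_nonempty_iff]
    rintro rfl
    simp at ha0
  obtain ⟨i, hi1, hi2⟩ := Finset.exists_max_image l.support (fun i => toColex (e i)) hne
  refine ⟨i, hl hi1, l i * α i, mul_ne_zero (Finsupp.mem_support_iff.1 hi1) (hα i), ?_⟩
  rw [Finsupp.linearCombination_apply, Finsupp.sum, ← Finset.add_sum_erase _ _ hi1]
  have h1 := (hg i).smul (l i)
  have h2 : Ld x (∑ j ∈ l.support.erase i, l j • g j) (0 : K) (e i) := by
    apply Ld_of_low
    apply Submodule.sum_mem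
    intro j hj
    rw [Finset.mem_erase] at hj
    apply Submodule.smul_mem
    apply (hg j).mem_low
    exact lt_of_le_of_ne (hi2 j hj.2) fun hc => hj.1 (he (toColex.injective hc))
  simpa using h1.add h2

lemma Sk.exists_Ld (S : Sk x act h q) {n : ℕ} {a : R} (ha : a ∈ Rsub K x n) (ha0 : a ≠ 0) :
    ∃ w, sb n w ∧ ∃ β : K, β ≠ 0 ∧ Ld x a β w :=
  exists_Ld_gen (ordMonomial x) id Function.injective_id (fun _ => (1 : K)) (fun _ => one_ne_zero)
    Ld_mon {w | sb n w} a (S.span n a ha) ha0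

/-- straightening scalar -/
def kap (q : Fin N → Fin N → Kˣ) (u w : Fin N → ℕ) : Kˣ :=
  ∏ i, ∏ j, if j < i then q i j ^ (u i * w j) else 1

lemma kap_add_left (u u' w : Fin N → ℕ) : kap q (u + u') w = kap q u w * kap q u' w := by
  unfold kap
  simp only [← Finset.prod_mul_distrib]
  refine Finset.prod_congr rfl fun i _ => Finset.prod_congr rfl fun j _ => ?_
  split_ifs
  · rw [← pow_add, Pi.add_apply, add_mul]
  · simp

lemma kap_add_right (u w w' : Fin N → ℕ) : kap q u (w + w') = kap q u w * kap q u w' := by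
  unfold kap
  simp only [← Finset.prod_mul_distrib]
  refine Finset.prod_congr rfl fun i _ => Finset.prod_congr rfl fun j _ => ?_
  split_ifs
  · rw [← pow_add, Pi.add_apply, mul_add]
  · simp

lemma kap_eq_one {u w : Fin N → ℕ} (h : ∀ i j, u i ≠ 0 → w j ≠ 0 → i ≤ j) : kap q u w = 1 := by
  unfold kap
  refine Finset.prod_eq_one fun i _ => Finset.prod_eq_one fun j _ => ?_
  split_ifs with hij
  · have : u i * w j = 0 := by
      by_contra hc
      rw [mul_eq_zero, not_or] at hc
      exact absurd (h i j hc.1 hc.2) (not_le.2 hij)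
    rw [this, pow_zero]
  · rfl

lemma kap_sg (n : Fin N) (w : Fin N → ℕ) : kap q (sg n) w = ∏ k, q n k ^ lo n w k := by
  unfold kap
  rw [Finset.prod_eq_single n]
  · refine Finset.prod_congr rfl fun j _ => ?_
    simp only [lo, Fin.lt_def]
    split_ifs <;> simp
  · intro i _ hi
    refine Finset.prod_eq_one fun j _ => ?_
    simp [Pi.single_apply, hi]
  · simp

lemma Sk.Ld_x_mon (S : Sk x act h q) (n : Fin N) (w : Fin N → ℕ) :
    Ld x (x n * ordMonomial x w) (kap q (sg n) w : K) (sg n + w) := by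
  obtain ⟨d, hd, he⟩ := S.left_mul n w
  unfold Ld
  rw [he, kap_sg, add_comm w, add_sub_cancel_left]
  have := S.span n d hd
  refine Submodule.span_induction ?_ ?_ ?_ ?_ this
  · rintro _ ⟨v, hv, rfl⟩
    rw [mon_mul _ _ _ (lo_hi_le hv)]
    refine Submodule.subset_span ⟨_, ?_, rfl⟩
    simp only [Set.mem_ofPred_eq]
    rw [rl_iff]
    refine ⟨n, fun j hj => ?_, ?_⟩
    · rw [Fin.lt_def] at hj
      have : j ≠ n := by rintro rfl; omega
      simp [hv j hj.le, this, hi, not_lt.2 hj.le]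
    · simp [hv n le_rfl, hi]
  · rw [zero_mul]; exact Submodule.zero_mem _
  · intro y z _ _ hy hz
    rw [add_mul]; exact Submodule.add_mem _ hy hz
  · intro t y _ hy
    rw [smul_mul_assoc]; exact Submodule.smul_mem _ _ hy

/-- pass from monomials to arbitrary leading terms -/
lemma Ld_mul_of (m : R) (u : Fin N → ℕ) (c : (Fin N → ℕ) → K)
    (H : ∀ w, Ld x (m * ordMonomial x w) (c w) (u + w)) {b : R} {β : K} {w : Fin N → ℕ}
    (hb : Ld x b β w) : Ld x (m * b) (β * c w) (u + w) := by
  have h1 : b = β • ordMonomial x w + (b - β • ordMonomial x w) := by abel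
  rw [h1, mul_add, mul_smul_comm]
  have h2 : Ld x (m * (b - β • ordMonomial x w)) (0 : K) (u + w) := by
    apply Ld_of_low
    have hb' : b - β • ordMonomial x w ∈ Submodule.span K (ordMonomial x '' {u | rl u w}) := hb
    refine Submodule.span_induction ?_ ?_ ?_ ?_ hb'
    · rintro _ ⟨v, hv, rfl⟩
      exact (H v).mem_low (rl_add_left u hv)
    · rw [mul_zero]; exact Submodule.zero_mem _
    · intro y z _ _ hy hz
      rw [mul_add]; exact Submodule.add_mem _ hy hz
    · intro t y _ hy
      rw [mul_smul_comm]; exact Submodule.smul_mem _ _ hy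
  simpa using ((H w).smul β).add h2

lemma Sk.Ld_mon_mon (S : Sk x act h q) (u w : Fin N → ℕ) :
    Ld x (ordMonomial x u * ordMonomial x w) (kap q u w : K) (u + w) := by
  generalize hn : ∑ i, u i = n
  induction n generalizing u with
  | zero =>
    have : u = 0 := by
      funext i
      simpa using (Finset.sum_eq_zero_iff.1 hn) i
    subst this
    rw [mon_zero, one_mul, zero_add, kap_eq_one (by simp)]
    exact Ld_mon w
  | succ n ih =>
    have hne : ∃ i, u i ≠ 0 := by
      by_contra hc
      push Not at hc
      simp [hc] at hn
    let T := Finset.univ.filter fun l => u l ≠ 0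
    have hT : T.Nonempty := by
      obtain ⟨i, hi⟩ := hne
      exact ⟨i, by simpa [T] using hi⟩
    have h1 := T.min'_mem hT
    have h2 : ∀ j ∈ T, T.min' hT ≤ j := fun j hj => T.min'_le j hj
    generalize T.min' hT = k at h1 h2
    simp only [T, Finset.mem_filter, Finset.mem_univ, true_and] at h1 h2
    have hu : u = sg k + (u - sg k) := by
      funext j
      by_cases hj : j = k
      · subst hj; simp; omega
      · simp [hj]
    set u' := u - sg k with hu'
    have hle : ∀ i j, sg k i ≠ 0 → u' j ≠ 0 → i ≤ j := by
      intro i j hi hj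
      have : i = k := by
        by_contra hc; simp [hc] at hi
      subst this
      apply h2
      intro hc
      simp [hu', hc] at hj
    have hs : ∑ i, u' i = n := by
      rw [hu] at hn
      simp only [Pi.add_apply, Finset.sum_add_distrib, Finset.sum_pi_single', Finset.mem_univ,
        if_true] at hn
      omega
    have h3 := Ld_mul_of (x k) (sg k) _ (S.Ld_x_mon k) (ih u' hs)
    rw [hu, ← mon_mul x (sg k) u' hle, mon_sg, pow_one, mul_assoc, add_assoc]
    convert h3 using 1
    rw [kap_add_left, kap_add_right, kap_eq_one hle, one_mul, mul_comm, Units.val_mul]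

lemma Sk.Ld_mul (S : Sk x act h q) {a b : R} {α β : K} {u w : Fin N → ℕ} (ha : Ld x a α u)
    (hb : Ld x b β w) : Ld x (a * b) (α * β * (kap q u w : K)) (u + w) := by
  have H := fun u => Ld_mul_of (ordMonomial x u) u _ (S.Ld_mon_mon u) hb
  have h1 : a = α • ordMonomial x u + (a - α • ordMonomial x u) := by abel
  rw [h1, add_mul, smul_mul_assoc]
  have h2 : Ld x ((a - α • ordMonomial x u) * b) (0 : K) (u + w) := by
    apply Ld_of_low
    have ha' : a - α • ordMonomial x u ∈ Submodule.span K (ordMonomial x '' {v | rl v u}) := ha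
    refine Submodule.span_induction ?_ ?_ ?_ ?_ ha'
    · rintro _ ⟨v, hv, rfl⟩
      exact (H v).mem_low (rl_add_right w hv)
    · rw [zero_mul]; exact Submodule.zero_mem _
    · intro y z _ _ hy hz
      rw [add_mul]; exact Submodule.add_mem _ hy hz
    · intro t y _ hy
      rw [smul_mul_assoc]; exact Submodule.smul_mem _ _ hy
  have := ((H u).smul α).add h2
  simpa [mul_assoc] using this

end Straight

section PrimeUp

variable {K : Type u} [Field K] {R : Type v} [Ring R] [Algebra K R] {r N : ℕ}
variable {x : Fin N → R} {act : Torus K r →* (R ≃ₐ[K] R)} {h : Fin N → Torus K r}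
  {q : Fin N → Fin N → Kˣ}

lemma x_mem {n : ℕ} {j : Fin N} (hj : (j : ℕ) < n) : x j ∈ Rsub K x n :=
  Algebra.subset_adjoin (Set.mem_image_of_mem x hj)

lemma Rsub_mono {m n : ℕ} (h : m ≤ n) : Rsub K x m ≤ Rsub K x n :=
  Algebra.adjoin_mono (Set.image_mono fun _ hl => lt_of_lt_of_le hl h)

lemma Ld_x (n : Fin N) : Ld x (x n) (1 : K) (sg n) := by
  have := Ld_mon (K := K) (x := x) (sg n)
  rwa [mon_sg, pow_one] at this

lemma Ld_x_pow (n : Fin N) (m : ℕ) : Ld x (x n ^ m) (1 : K) (Pi.single n m) := by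
  have := Ld_mon (K := K) (x := x) (Pi.single n m)
  rwa [mon_sg] at this

lemma kap_sg_sg (m n : Fin N) (hmn : m < n) : kap q (sg n) (sg m) = q n m := by
  rw [kap_sg, Finset.prod_eq_single m]
  · simp [lo, Fin.lt_def.1 hmn]
  · intro j _ hj
    simp [lo, hj]
  · simp

/-- leading term of a reversed monomial -/
lemma Sk.Ld_rev (S : Sk x act h q) (v : Fin N → ℕ) :
    ∃ α : K, α ≠ 0 ∧ Ld x (ordMonomial (x ∘ Fin.rev) v) α (v ∘ Fin.rev) := by
  have key : ∀ L : List (Fin N), ∃ α : K, α ≠ 0 ∧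
      Ld x (L.map fun k => (x ∘ Fin.rev) k ^ v k).prod α
        (L.map fun k => (Pi.single (Fin.rev k) (v k) : Fin N → ℕ)).sum := by
    intro L
    induction L with
    | nil =>
      refine ⟨1, one_ne_zero, ?_⟩
      have := Ld_mon (K := K) (x := x) 0
      rwa [mon_zero] at this
    | cons a L ih =>
      obtain ⟨α, h1, h2⟩ := ih
      refine ⟨_, ?_, S.Ld_mul (Ld_x_pow (Fin.rev a) (v a)) h2⟩
      simp [h1]
  obtain ⟨α, h1, h2⟩ := key (List.finRange N)
  refine ⟨α, h1, ?_⟩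
  have hsum : v ∘ Fin.rev = ((List.finRange N).map
      fun k => (Pi.single (Fin.rev k) (v k) : Fin N → ℕ)).sum := by
   rw [← Fin.sum_univ_def]
   funext j
   rw [Finset.sum_apply, Finset.sum_eq_single (Fin.rev j)]
   · simp
   · intro b _ hb
     rw [Pi.single_apply, if_neg]
     rintro rfl
     simp at hb
   · simp
  rw [hsum]
  exact h2

lemma rev_eig (S : Sk x act h q) (P : LinearIndependent K (ordMonomial (R := R) x))
    (hs : Fin N → Torus K r) (qs : Fin N → Fin N → Kˣ)
    (heig : ∀ i j, act (hs i) (x j) = (qs i j : K) • x j)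
    (stableRev : ∀ k : Fin N, ∀ a ∈ RsubRev K x (k : ℕ),
      skewDelta K act x hs k a ∈ RsubRev K x (k : ℕ)) {m n : Fin N} (hmn : m < n) :
    qs m n * q n m = 1 := by
  have hR : ∀ k : Fin N, Rsub K (x ∘ Fin.rev) (k : ℕ) = RsubRev K x (Fin.rev k : ℕ) := by
    intro k
    unfold Rsub RsubRev
    congr 1
    ext a
    simp only [Set.mem_image, Set.mem_ofPred_eq, Function.comp]
    constructor
    · rintro ⟨l, hl, rfl⟩
      exact ⟨Fin.rev l, Fin.rev_lt_rev.2 (Fin.lt_def.2 hl), rfl⟩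
    · rintro ⟨l, hl, rfl⟩
      refine ⟨Fin.rev l, ?_, by simp⟩
      have : Fin.rev k < l := hl
      rw [← Fin.rev_lt_rev, Fin.rev_rev] at this
      exact this
  have S' : Sk (x ∘ Fin.rev) act (hs ∘ Fin.rev) (fun i j => qs (Fin.rev i) (Fin.rev j)) := by
    refine ⟨fun i j => heig _ _, fun k a ha => ?_⟩
    rw [hR] at ha ⊢
    exact stableRev (Fin.rev k) a ha
  have hz := stableRev m (x n) (Algebra.subset_adjoin (Set.mem_image_of_mem x hmn))
  set z := skewDelta K act x hs m (x n) with hzd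
  have hL : Ld x z (1 - (qs m n * q n m : Kˣ) : K) (sg m + sg n) := by
    have h1 := S.Ld_mul (Ld_x m) (Ld_x n)
    rw [kap_eq_one] at h1
    · have h2 := (S.Ld_mul (Ld_x n) (Ld_x m)).smul (qs m n : K)
      rw [kap_sg_sg m n hmn, add_comm] at h2
      have := h1.sub h2
      simp only [hzd, skewDelta, heig, smul_mul_assoc]
      convert this using 1
      simp
    · intro i j hi hj
      have : i = m := by by_contra hc; simp [hc] at hi
      have : j = n := by by_contra hc; simp [hc] at hj
      subst i j; exact hmn.le
  by_contra hne
  have hc : (1 - (qs m n * q n m : Kˣ) : K) ≠ 0 := by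
    intro h0
    apply hne
    rw [sub_eq_zero] at h0
    exact Units.ext h0.symm
  have hz0 := hL.ne_zero P hc
  have hz' : z ∈ Rsub K (x ∘ Fin.rev) (Fin.rev m : ℕ) := by rw [hR, Fin.rev_rev]; exact hz
  choose α hα hLα using S.Ld_rev
  obtain ⟨v, hv, β, hβ, hLz⟩ := exists_Ld_gen (ordMonomial (x ∘ Fin.rev)) (fun v => v ∘ Fin.rev)
    (fun a b hab => by
      funext j
      have := congrFun hab (Fin.rev j)
      simpa using this) α hα hLα _ z (S'.span _ z hz') hz0
  have h3 := congrFun (hLz.exp_eq P hL hβ hc) m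
  have h4 : v (Fin.rev m) = 0 := hv _ le_rfl
  simp [h4] at h3
  omega

lemma Rsub_act (E : Torus K r → Fin N → Kˣ) (hE : ∀ ξ k, act ξ (x k) = (E ξ k : K) • x k)
    (n : ℕ) (ξ : Torus K r) {a : R} (ha : a ∈ Rsub K x n) : act ξ a ∈ Rsub K x n := by
  refine Algebra.adjoin_induction ?_ ?_ ?_ ?_ ha
  · rintro _ ⟨j, hj, rfl⟩
    rw [hE]
    exact Subalgebra.smul_mem _ (x_mem hj) _
  · intro t
    rw [AlgEquiv.commutes]
    exact Subalgebra.algebraMap_mem _ _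
  · intro y z _ _ hy hz
    rw [map_add]; exact Subalgebra.add_mem _ hy hz
  · intro y z _ _ hy hz
    rw [map_mul]; exact Subalgebra.mul_mem _ hy hz

/-- elements of degree less than `m` in `x k` -/
def Dg (K : Type u) [Field K] [Algebra K R] (x : Fin N → R) (k : Fin N) (m : ℕ) : Submodule K R :=
  Submodule.span K {a | ∃ c ∈ Rsub K x (k : ℕ), ∃ i < m, a = c * x k ^ i}

lemma Dg_mem {k : Fin N} {m i : ℕ} {c : R} (hc : c ∈ Rsub K x (k : ℕ)) (hi : i < m) :
    c * x k ^ i ∈ Dg K x k m := Submodule.subset_span ⟨c, hc, i, hi, rfl⟩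

lemma Dg_mono {k : Fin N} {m n : ℕ} (h : m ≤ n) : Dg K x k m ≤ Dg K x k n :=
  Submodule.span_mono fun _ ⟨c, hc, i, hi, e⟩ => ⟨c, hc, i, hi.trans_le h, e⟩

lemma Dg_zero {k : Fin N} {a : R} (ha : a ∈ Dg K x k 0) : a = 0 := by
  have : {a : R | ∃ c ∈ Rsub K x (k : ℕ), ∃ i < 0, a = c * x k ^ i} = ∅ := by
    ext; simp
  unfold Dg at ha
  rw [this, Submodule.span_empty] at ha
  exact (Submodule.mem_bot K).1 ha

lemma Dg_succ {k : Fin N} {m : ℕ} {a : R} (ha : a ∈ Dg K x k (m + 1)) :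
    ∃ a' ∈ Dg K x k m, ∃ c ∈ Rsub K x (k : ℕ), a = a' + c * x k ^ m := by
  unfold Dg at ha
  refine Submodule.span_induction ?_ ?_ ?_ ?_ ha
  · rintro _ ⟨c, hc, i, hi, rfl⟩
    rcases Nat.lt_succ_iff_lt_or_eq.1 hi with h | rfl
    · exact ⟨_, Dg_mem hc h, 0, Subalgebra.zero_mem _, by simp⟩
    · exact ⟨0, Submodule.zero_mem _, c, hc, by simp⟩
  · exact ⟨0, Submodule.zero_mem _, 0, Subalgebra.zero_mem _, by simp⟩
  · rintro y z _ _ ⟨a, ha, c, hc, rfl⟩ ⟨b, hb, d, hd, rfl⟩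
    exact ⟨_, Submodule.add_mem _ ha hb, _, Subalgebra.add_mem _ hc hd, by rw [add_mul]; abel⟩
  · rintro t y _ ⟨a, ha, c, hc, rfl⟩
    exact ⟨_, Submodule.smul_mem _ t ha, _, Subalgebra.smul_mem _ hc t, by
      rw [smul_add, smul_mul_assoc]⟩

lemma Sk.exists_Dg (S : Sk x act h q) (k : Fin N) {a : R} (ha : a ∈ Rsub K x ((k : ℕ) + 1)) :
    ∃ m, a ∈ Dg K x k m := by
  refine Submodule.span_induction ?_ ?_ ?_ ?_ (S.span _ a ha)
  · rintro _ ⟨w, hw, rfl⟩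
    refine ⟨w k + 1, ?_⟩
    have : ordMonomial x w = ordMonomial x (lo k w) * x k ^ (w k) := by
      rw [← mon_sg, mon_mul]
      · congr 1
        funext j
        simp only [lo, Pi.add_apply, Pi.single_apply]
        rcases lt_trichotomy j k with hj | hj | hj
        · simp [hj.ne, Fin.lt_def.1 hj]
        · simp [hj]
        · rw [Fin.lt_def] at hj
          have h2 : j ≠ k := by rintro rfl; omega
          simp [h2, not_lt.2 hj.le, hw j hj]
      · intro i j hi hj
        have : j = k := by by_contra hc; simp [hc] at hj
        subst this
        by_contra hc
        rw [Fin.le_def] at hc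
        simp only [lo] at hi
        rw [if_neg (by omega)] at hi
        exact hi rfl
    rw [this]
    exact Dg_mem (mon_mem x _ _ (sb_lo _ _)) (Nat.lt_succ_self _)
  · exact ⟨0, Submodule.zero_mem _⟩
  · rintro y z _ _ ⟨m, hm⟩ ⟨n, hn⟩
    exact ⟨max m n, Submodule.add_mem _ (Dg_mono (le_max_left _ _) hm)
      (Dg_mono (le_max_right _ _) hn)⟩
  · rintro t y _ ⟨m, hm⟩
    exact ⟨m, Submodule.smul_mem _ t hm⟩

lemma Sk.Dg_top (S : Sk x act h q) (P : LinearIndependent K (ordMonomial (R := R) x)) {k : Fin N}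
    {m : ℕ} {c : R} (hc : c ∈ Rsub K x (k : ℕ)) (hm : c * x k ^ m ∈ Dg K x k m) : c = 0 := by
  by_contra hc0
  obtain ⟨w, hw, β, hβ, hL⟩ := S.exists_Ld hc hc0
  have h1 := S.Ld_mul hL (Ld_x_pow k m)
  have h2 : Dg K x k m ≤ Low (K := K) x (w + Pi.single k m) := by
    unfold Dg
    rw [Submodule.span_le]
    rintro _ ⟨d, hd, i, hi, rfl⟩
    by_cases hd0 : d = 0
    · rw [hd0, zero_mul]; exact Submodule.zero_mem _
    obtain ⟨v, hv, γ, _, hLd⟩ := S.exists_Ld hd hd0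
    refine (S.Ld_mul hLd (Ld_x_pow k i)).mem_low ?_
    rw [rl_iff]
    refine ⟨k, fun j hj => ?_, ?_⟩
    · rw [Fin.lt_def] at hj
      have h2 : j ≠ k := by rintro rfl; omega
      simp [h2, hv j hj.le, hw j hj.le]
    · simp [hv k le_rfl, hw k le_rfl, hi]
  have h3 := h1.coeff_eq P (Ld_of_low (h2 hm))
  simp [hβ] at h3

lemma Sk.mul_ne_zero (S : Sk x act h q) (P : LinearIndependent K (ordMonomial (R := R) x)) {n : ℕ}
    {a b : R} (ha : a ∈ Rsub K x n) (hb : b ∈ Rsub K x n) (ha0 : a ≠ 0) (hb0 : b ≠ 0) :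
    a * b ≠ 0 := by
  obtain ⟨w, hw, β, hβ, hL⟩ := S.exists_Ld ha ha0
  obtain ⟨v, hv, γ, hγ, hL'⟩ := S.exists_Ld hb hb0
  exact (S.Ld_mul hL hL').ne_zero P (by simp [hβ, hγ])

lemma prime_up (S : Sk x act h q) (P : LinearIndependent K (ordMonomial (R := R) x))
    (E : Torus K r → Fin N → Kˣ) (hE : ∀ ξ k, act ξ (x k) = (E ξ k : K) • x k)
    (k : Fin N) (hδ : ∀ a ∈ Rsub K x (k : ℕ), skewDelta K act x h k a = 0)
    (p : R) (hp : IsPrimeIn K (Rsub K x (k : ℕ)) p) (f : Fin r → ℤ) (hf : IsEigenWith K act f p) :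
    IsPrimeIn K (Rsub K x ((k : ℕ) + 1)) p := by
  obtain ⟨hpA, hp0, hpu, hpn1, hpn2, hpp⟩ := hp
  have hmono : Rsub K x (k : ℕ) ≤ Rsub K x ((k : ℕ) + 1) := Rsub_mono (Nat.le_succ _)
  have hz : x k ∈ Rsub K x ((k : ℕ) + 1) := x_mem (Nat.lt_succ_self _)
  have hza : ∀ a ∈ Rsub K x (k : ℕ), x k * a = act (h k) a * x k := by
    intro a ha
    have := hδ a ha
    unfold skewDelta at this
    exact sub_eq_zero.1 this
  have hzpa : ∀ i : ℕ, ∀ a ∈ Rsub K x (k : ℕ), x k ^ i * a = act (h k ^ i) a * x k ^ i := by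
    intro i
    induction i with
    | zero => simp
    | succ i ih =>
      intro a ha
      rw [pow_succ', mul_assoc, ih a ha, ← mul_assoc, hza _ (Rsub_act E hE _ _ ha), mul_assoc,
        pow_succ' (h k), map_mul]
      rfl
  have hn1 : ∀ a ∈ Rsub K x ((k : ℕ) + 1), ∃ b ∈ Rsub K x ((k : ℕ) + 1), a * p = p * b := by
    intro a ha
    refine Algebra.adjoin_induction ?_ ?_ ?_ ?_ ha
    · rintro _ ⟨j, hj, rfl⟩
      rcases Nat.lt_succ_iff_lt_or_eq.1 hj with h1 | h1
      · obtain ⟨b, hb, e⟩ := hpn1 (x j) (x_mem h1)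
        exact ⟨b, hmono hb, e⟩
      · obtain rfl : j = k := Fin.ext h1
        rw [hza p hpA, hf]
        exact ⟨_, Subalgebra.smul_mem _ hz _, by rw [mul_smul_comm, smul_mul_assoc]⟩
    · intro t
      exact ⟨_, Subalgebra.algebraMap_mem _ t, Algebra.commutes _ _⟩
    · rintro y z _ _ ⟨b, hb, e⟩ ⟨b', hb', e'⟩
      exact ⟨_, Subalgebra.add_mem _ hb hb', by rw [add_mul, mul_add, e, e']⟩
    · rintro y z _ _ ⟨b, hb, e⟩ ⟨b', hb', e'⟩
      exact ⟨_, Subalgebra.mul_mem _ hb hb', by rw [mul_assoc, e', ← mul_assoc, e, mul_assoc]⟩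
  have hn2 : ∀ a ∈ Rsub K x ((k : ℕ) + 1), ∃ b ∈ Rsub K x ((k : ℕ) + 1), p * a = b * p := by
    intro a ha
    refine Algebra.adjoin_induction ?_ ?_ ?_ ?_ ha
    · rintro _ ⟨j, hj, rfl⟩
      rcases Nat.lt_succ_iff_lt_or_eq.1 hj with h1 | h1
      · obtain ⟨b, hb, e⟩ := hpn2 (x j) (x_mem h1)
        exact ⟨b, hmono hb, e⟩
      · obtain rfl : j = k := Fin.ext h1
        have h2 := hza p hpA
        rw [hf] at h2
        refine ⟨((∏ i, h j i ^ f i : Kˣ)⁻¹ : Kˣ).val • x j, Subalgebra.smul_mem _ hz _, ?_⟩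
        rw [smul_mul_assoc, h2, smul_mul_assoc, smul_smul, Units.inv_mul, one_smul]
    · intro t
      exact ⟨_, Subalgebra.algebraMap_mem _ t, (Algebra.commutes _ _).symm⟩
    · rintro y z _ _ ⟨b, hb, e⟩ ⟨b', hb', e'⟩
      exact ⟨_, Subalgebra.add_mem _ hb hb', by rw [add_mul, mul_add, e, e']⟩
    · rintro y z _ _ ⟨b, hb, e⟩ ⟨b', hb', e'⟩
      exact ⟨_, Subalgebra.mul_mem _ hb hb', by rw [← mul_assoc, e, mul_assoc, e', mul_assoc]⟩
  refine ⟨hmono hpA, hp0, ?_, hn1, hn2, ?_⟩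
  · rintro ⟨u, hu, h1, h2⟩
    have hne : (1 : R) ≠ 0 := fun hc => hp0 (by rw [← mul_one p, hc, mul_zero])
    have hu0 : u ≠ 0 := by rintro rfl; rw [mul_zero] at h1; exact hne h1.symm
    obtain ⟨w, hw, β, hβ, hL⟩ := S.exists_Ld hpA hp0
    obtain ⟨v, hv, γ, hγ, hL'⟩ := S.exists_Ld hu hu0
    have h3 := S.Ld_mul hL hL'
    rw [h1] at h3
    have h4 := Ld_mon (K := K) (x := x) 0
    rw [mon_zero] at h4
    have h5 := h3.exp_eq P h4 (by simp [hβ, hγ]) one_ne_zero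
    refine hpu ⟨u, hL'.mem_Rsub (fun j _ => ?_), h1, h2⟩
    have := congrFun h5 j
    simp at this
    exact this.2
  have hDgmul : ∀ m n t : ℕ, m + n ≤ t + 1 → ∀ a ∈ Dg K x k m, ∀ b ∈ Dg K x k n,
      a * b ∈ Dg K x k t := by
    intro m n t hmn a ha b hb
    unfold Dg at ha
    refine Submodule.span_induction ?_ ?_ ?_ ?_ ha
    · rintro _ ⟨c, hc, i, hi, rfl⟩
      unfold Dg at hb
      refine Submodule.span_induction ?_ ?_ ?_ ?_ hb
      · rintro _ ⟨d, hd, j, hj, rfl⟩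
        rw [mul_assoc, ← mul_assoc (x k ^ i), hzpa i d hd, mul_assoc, ← pow_add, ← mul_assoc]
        exact Dg_mem (Subalgebra.mul_mem _ hc (Rsub_act E hE _ _ hd)) (by omega)
      · rw [mul_zero]; exact Submodule.zero_mem _
      · intro y z _ _ hy hz
        rw [mul_add]; exact Submodule.add_mem _ hy hz
      · intro t y _ hy
        rw [mul_smul_comm]; exact Submodule.smul_mem _ _ hy
    · rw [zero_mul]; exact Submodule.zero_mem _
    · intro y z _ _ hy hz
      rw [add_mul]; exact Submodule.add_mem _ hy hz
    · intro t y _ hy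
      rw [smul_mul_assoc]; exact Submodule.smul_mem _ _ hy
  have hDgA : ∀ m, ∀ a ∈ Dg K x k m, a ∈ Rsub K x ((k : ℕ) + 1) := by
    intro m a ha
    have : Dg K x k m ≤ Subalgebra.toSubmodule (Rsub K x ((k : ℕ) + 1)) := by
      unfold Dg
      rw [Submodule.span_le]
      rintro _ ⟨c, hc, i, _, rfl⟩
      exact Subalgebra.mul_mem _ (hmono hc) (Subalgebra.pow_mem _ hz _)
    exact this ha
  have hpD : ∀ m, ∀ a ∈ Dg K x k m, p * a ∈ Dg K x k m := by
    intro m a ha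
    refine hDgmul 1 m m (by omega) p ?_ a ha
    have := Dg_mem (K := K) (x := x) (k := k) hpA (Nat.zero_lt_one)
    simpa using this
  -- degree of the cofactor
  have hcof : ∀ t M : ℕ, ∀ e ∈ Dg K x k (t + M), p * e ∈ Dg K x k t → e ∈ Dg K x k t := by
    intro t M
    induction M with
    | zero => intro e he _; exact he
    | succ M ih =>
      intro e he hpe
      obtain ⟨e', he', c, hc, rfl⟩ := Dg_succ he
      have h1 : p * c * x k ^ (t + M) ∈ Dg K x k (t + M) := by
        have h2 := Submodule.sub_mem _ (Dg_mono (Nat.le_add_right t M) hpe) (hpD _ _ he')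
        rw [mul_add, add_sub_cancel_left, ← mul_assoc] at h2
        exact h2
      have h3 := S.Dg_top P (Subalgebra.mul_mem _ hpA hc) h1
      have h4 : c = 0 := by
        by_contra hc0
        exact S.mul_ne_zero P hpA hc hp0 hc0 h3
      rw [h4, zero_mul, add_zero] at hpe ⊢
      exact ih _ he' hpe
  have main : ∀ s m n : ℕ, m + n ≤ s → ∀ a ∈ Dg K x k m, ∀ b ∈ Dg K x k n,
      (∃ d ∈ Rsub K x ((k : ℕ) + 1), a * b = p * d) →
      (∃ d ∈ Rsub K x ((k : ℕ) + 1), a = p * d) ∨ (∃ d ∈ Rsub K x ((k : ℕ) + 1), b = p * d) := by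
    intro s
    induction s with
    | zero =>
      intro m n hmn a ha b hb _
      obtain rfl : m = 0 := by omega
      left
      exact ⟨0, Subalgebra.zero_mem _, by rw [Dg_zero ha, mul_zero]⟩
    | succ s ih =>
      intro m n hmn a ha b hb hab
      rcases m with _ | m
      · left
        exact ⟨0, Subalgebra.zero_mem _, by rw [Dg_zero ha, mul_zero]⟩
      rcases n with _ | n
      · right
        exact ⟨0, Subalgebra.zero_mem _, by rw [Dg_zero hb, mul_zero]⟩
      obtain ⟨a', ha', c, hc, rfl⟩ := Dg_succ ha
      obtain ⟨b', hb', d, hd, rfl⟩ := Dg_succ hb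
      obtain ⟨e, he, hab⟩ := hab
      have hcz : c * x k ^ m ∈ Dg K x k (m + 1) := Dg_mem hc (Nat.lt_succ_self _)
      have hsplit : (a' + c * x k ^ m) * (b' + d * x k ^ n) =
          (a' * (b' + d * x k ^ n) + c * x k ^ m * b') +
            (c * act (h k ^ m) d) * x k ^ (m + n) := by
        have : c * x k ^ m * (d * x k ^ n) = (c * act (h k ^ m) d) * x k ^ (m + n) := by
          rw [mul_assoc, ← mul_assoc (x k ^ m), hzpa m d hd, mul_assoc, ← pow_add, ← mul_assoc]
        rw [add_mul, mul_add (c * x k ^ m), this, add_assoc]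
      have hlow : a' * (b' + d * x k ^ n) + c * x k ^ m * b' ∈ Dg K x k (m + n) :=
        Submodule.add_mem _ (hDgmul m (n + 1) _ (by omega) _ ha' _ hb)
          (hDgmul (m + 1) n _ (by omega) _ hcz _ hb')
      have hcd : c * act (h k ^ m) d ∈ Rsub K x (k : ℕ) :=
        Subalgebra.mul_mem _ hc (Rsub_act E hE _ _ hd)
      have hpe : p * e ∈ Dg K x k (m + n + 1) := by
        rw [← hab, hsplit]
        exact Submodule.add_mem _ (Dg_mono (Nat.le_succ _) hlow) (Dg_mem hcd (Nat.lt_succ_self _))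
      have heD : e ∈ Dg K x k (m + n + 1) := by
        obtain ⟨M, hM⟩ := S.exists_Dg k he
        exact hcof _ M e (Dg_mono (by omega) hM) hpe
      obtain ⟨e', he', g, hg, rfl⟩ := Dg_succ heD
      have htop : c * act (h k ^ m) d - p * g = 0 := by
        apply S.Dg_top P (k := k) (m := m + n)
          (Subalgebra.sub_mem _ hcd (Subalgebra.mul_mem _ hpA hg))
        have h1 := Submodule.sub_mem _ (hpD _ _ he') hlow
        have hab2 := hsplit.symm.trans hab
        rw [mul_add p, ← mul_assoc p g] at hab2
        convert h1 using 1
        rw [sub_mul, sub_eq_sub_iff_add_eq_add, add_comm, hab2]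
      rcases hpp c hc _ (Rsub_act E hE _ (h k ^ m) hd) ⟨g, hg, sub_eq_zero.1 htop⟩ with
        ⟨c', hc', rfl⟩ | ⟨d', hd', hdd⟩
      · have hmem : c' * x k ^ m ∈ Rsub K x ((k : ℕ) + 1) :=
          Subalgebra.mul_mem _ (hmono hc') (Subalgebra.pow_mem _ hz _)
        rcases ih m (n + 1) (by omega) a' ha' _ hb ⟨_, Subalgebra.sub_mem _ he
          (Subalgebra.mul_mem _ hmem (hDgA _ _ hb)), by
            rw [mul_sub, ← hab]; noncomm_ring⟩ with ⟨u, hu, rfl⟩ | h1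
        · left
          exact ⟨_, Subalgebra.add_mem _ hu hmem, by rw [mul_add, mul_assoc]⟩
        · right; exact h1
      · have hd2 : ∃ d'' ∈ Rsub K x (k : ℕ), d = p * d'' := by
          have h1 : d = act (h k ^ m)⁻¹ (act (h k ^ m) d) := by
            rw [← AlgEquiv.mul_apply, ← map_mul, inv_mul_cancel, map_one]; rfl
          rw [h1, hdd, map_mul, hf, smul_mul_assoc, ← mul_smul_comm]
          exact ⟨_, Subalgebra.smul_mem _ (Rsub_act E hE _ _ hd') _, rfl⟩
        obtain ⟨d'', hd'', rfl⟩ := hd2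
        have hmem : d'' * x k ^ n ∈ Rsub K x ((k : ℕ) + 1) :=
          Subalgebra.mul_mem _ (hmono hd'') (Subalgebra.pow_mem _ hz _)
        obtain ⟨a2, ha2, hae⟩ := hn1 _ (hDgA _ _ ha)
        rcases ih (m + 1) n (by omega) _ ha b' hb' ⟨_, Subalgebra.sub_mem _ he
          (Subalgebra.mul_mem _ ha2 hmem), by
            rw [mul_sub, ← hab, ← mul_assoc, ← hae]; noncomm_ring⟩ with h1 | ⟨u, hu, rfl⟩
        · left; exact h1
        · right
          exact ⟨_, Subalgebra.add_mem _ hu hmem, by rw [mul_add, mul_assoc]⟩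
  intro a ha b hb hab
  obtain ⟨m, hm⟩ := S.exists_Dg k ha
  obtain ⟨n, hn⟩ := S.exists_Dg k hb
  exact main _ m n le_rfl a hm b hn hab

end PrimeUp

section Weights

variable {K : Type u} [Field K] {R : Type v} [Ring R] [Algebra K R] {r N : ℕ}
variable {x : Fin N → R} {act : Torus K r →* (R ≃ₐ[K] R)} {h : Fin N → Torus K r}
  {q : Fin N → Fin N → Kˣ} {X : Fin N → Fin r → ℤ}

/-- the value at `ξ` of the character of the `j`-th generator -/
def ch (X : Fin N → Fin r → ℤ) (ξ : Torus K r) (j : Fin N) : Kˣ := ∏ i, ξ i ^ X j i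

lemma zpow_sum_fin {G : Type*} [CommGroup G] {ι : Type*} (s : Finset ι) (a : G) (f : ι → ℤ) :
    a ^ (∑ i ∈ s, f i) = ∏ i ∈ s, a ^ f i := by
  classical
  induction s using Finset.induction_on with
  | empty => simp
  | insert i s hi ih => rw [Finset.sum_insert hi, Finset.prod_insert hi, zpow_add, ih]

lemma prod_ch (X : Fin N → Fin r → ℤ) (ξ : Torus K r) (f : Fin N → ℤ) :
    ∏ k, ch X ξ k ^ f k = ∏ i, ξ i ^ wt X f i := by
  unfold ch wt
  simp only [← Finset.prod_zpow]
  rw [Finset.prod_comm]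
  refine Finset.prod_congr rfl fun i _ => ?_
  rw [zpow_sum_fin]
  refine Finset.prod_congr rfl fun k _ => ?_
  rw [← zpow_mul, mul_comm]

lemma prod_chN (X : Fin N → Fin r → ℤ) (ξ : Torus K r) (f : Fin N → ℕ) :
    ∏ k, ch X ξ k ^ f k = ∏ i, ξ i ^ wt X (fun j => (f j : ℤ)) i := by
  rw [← prod_ch]
  simp

lemma Ld_act (hE : ∀ ξ k, act ξ (x k) = (ch X ξ k : K) • x k) {a : R} {α : K} {w : Fin N → ℕ}
    (ha : Ld x a α w) (ξ : Torus K r) :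
    Ld x (act ξ a) (((∏ k, ch X ξ k ^ w k : Kˣ) : K) * α) w := by
  have h1 : a = α • ordMonomial x w + (a - α • ordMonomial x w) := by abel
  rw [h1, map_add, map_smul, act_mon act x ξ _ (hE ξ), smul_comm]
  have h2 : Ld x (act ξ (a - α • ordMonomial x w)) (0 : K) w := by
    apply Ld_of_low
    have ha' : a - α • ordMonomial x w ∈ Submodule.span K (ordMonomial x '' {v | rl v w}) := ha
    refine Submodule.span_induction ?_ ?_ ?_ ?_ ha'
    · rintro _ ⟨v, hv, rfl⟩
      rw [act_mon act x ξ _ (hE ξ)]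
      exact Submodule.smul_mem _ _ (Submodule.subset_span ⟨v, hv, rfl⟩)
    · rw [map_zero]; exact Submodule.zero_mem _
    · intro y z _ _ hy hz
      rw [map_add]; exact Submodule.add_mem _ hy hz
    · intro t y _ hy
      rw [map_smul]; exact Submodule.smul_mem _ _ hy
  have h3 := (((Ld_mon (K := K) (x := x) w).smul α).smul
    ((∏ k, ch X ξ k ^ w k : Kˣ) : K)).add h2
  simpa using h3

lemma mon_eigen (hE : ∀ ξ k, act ξ (x k) = (ch X ξ k : K) • x k) (w : Fin N → ℕ) :
    IsEigenWith K act (wt X (fun j => (w j : ℤ))) (ordMonomial x w) := by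
  intro ξ
  rw [act_mon act x ξ _ (hE ξ), prod_chN]

lemma weight_eq (hE : ∀ ξ k, act ξ (x k) = (ch X ξ k : K) • x k)
    (P : LinearIndependent K (ordMonomial (R := R) x)) (t : Kˣ)
    (ht : ∀ n : ℤ, t ^ n = 1 → n = 0) {a : R} {α : K} {w : Fin N → ℕ} (ha : Ld x a α w)
    (hα : α ≠ 0) {f : Fin r → ℤ} (hf : IsEigenWith K act f a) :
    f = wt X (fun j => (w j : ℤ)) := by
  funext i
  have h1 := Ld_act hE ha (Pi.mulSingle i t)
  rw [hf, prod_chN] at h1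
  have h2 := (ha.smul _).coeff_eq P h1
  have h3 := mul_right_cancel₀ hα h2
  have h4 := Units.ext h3
  have h5 : ∀ g : Fin r → ℤ, ∏ j, (Pi.mulSingle i t : Torus K r) j ^ g j = t ^ g i := by
    intro g
    rw [Finset.prod_eq_single i]
    · simp
    · intro j _ hj
      simp [hj]
    · simp
  rw [h5, h5] at h4
  have h6 := ht (f i - wt X (fun j => (w j : ℤ)) i) (by rw [zpow_sub, h4, mul_inv_cancel])
  omega

/-- natural number version of `ebar` -/
def eb (η : Fin N → ℤ) (k : Fin N) : Fin N → ℕ := fun l => if l ≤ k ∧ η l = η k then 1 else 0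

lemma eb_cast (η : Fin N → ℤ) (k : Fin N) : (fun j => ((eb η k j : ℕ) : ℤ)) = ebar η k := by
  funext j
  unfold eb ebar
  split_ifs <;> rfl

lemma eb_self (η : Fin N → ℤ) (k : Fin N) : eb η k k = 1 := by simp [eb]

lemma eb_zero (η : Fin N → ℤ) {k l : Fin N} (h : k < l) : eb η k l = 0 := by
  simp [eb, h.not_ge]

lemma sb_eb (η : Fin N → ℤ) {k : Fin N} {n : ℕ} (h : (k : ℕ) < n) : sb n (eb η k) := by
  intro j hj
  exact eb_zero η (by rw [Fin.lt_def]; omega)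

lemma eb_inj (η : Fin N → ℤ) {k l : Fin N} (h : eb η k = eb η l) : k = l := by
  rcases lt_trichotomy k l with hl | hl | hl
  · have := congrFun h l
    rw [eb_self, eb_zero η hl] at this
    omega
  · exact hl
  · have := congrFun h k
    rw [eb_self, eb_zero η hl] at this
    omega

lemma eb_pr (η : Fin N → ℤ) {k s : Fin N} (hp : IsPr η k s) : eb η s = eb η k + sg s := by
  obtain ⟨h1, h2, h3⟩ := hp
  funext j
  simp only [eb, Pi.add_apply, Pi.single_apply]
  by_cases hj : j = s
  · subst hj
    simp [h1]
  · by_cases he : η j = η s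
    · have : j ≤ s ↔ j ≤ k := by
        constructor
        · intro hc
          by_contra hk
          exact h3 j (not_le.1 hk) (lt_of_le_of_ne hc hj) he
        · intro hc
          exact hc.trans h1.le
      simp [this, he, h2, hj]
    · simp [he, h2, hj]

lemma eb_nopr (η : Fin N → ℤ) {s : Fin N} (hp : ∀ k, k < s → η k ≠ η s) : eb η s = sg s := by
  funext j
  simp only [eb, Pi.single_apply]
  by_cases hj : j = s
  · subst hj; simp
  · rw [if_neg, if_neg hj]
    rintro ⟨h1, h2⟩
    exact hp j (lt_of_le_of_ne h1 hj) h2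

lemma predIdx_pr (η : Fin N → ℤ) {k s : Fin N} (hp : IsPr η k s) : predIdx η s = (k : WithBot _) := by
  obtain ⟨h1, h2, h3⟩ := hp
  unfold predIdx
  apply le_antisymm
  · apply Finset.max_le
    intro a ha
    simp only [Finset.mem_filter, Finset.mem_univ, true_and] at ha
    rw [WithBot.coe_le_coe]
    by_contra hc
    exact h3 a (not_le.1 hc) ha.1 ha.2
  · exact Finset.le_max (by simp [h1, h2])

lemma predIdx_nopr (η : Fin N → ℤ) {s : Fin N} (hp : ∀ k, k < s → η k ≠ η s) :
    predIdx η s = ⊥ := by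
  unfold predIdx
  rw [Finset.max_eq_bot, Finset.filter_eq_empty_iff]
  rintro k _ ⟨h1, h2⟩
  exact hp k h1 h2

lemma pr_or (η : Fin N → ℤ) (s : Fin N) : (∃ k, IsPr η k s) ∨ (∀ k, k < s → η k ≠ η s) := by
  rcases ebar_or η s with ⟨k, h, -⟩ | ⟨h, -⟩
  · exact Or.inl ⟨k, h⟩
  · exact Or.inr h

lemma Ld_of_mem (S : Sk x act h q) {k : Fin N} {a : R} (ha : a ∈ Rsub K x (k : ℕ)) {w : Fin N → ℕ}
    (hw : sb ((k : ℕ) + 1) w) (hk : w k ≠ 0) : Ld x a (0 : K) w := by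
  by_cases h0 : a = 0
  · rw [h0]; exact Ld_of_low (Submodule.zero_mem _)
  · obtain ⟨v, hv, β, _, hL⟩ := S.exists_Ld ha h0
    exact hL.lift (rl_of_sb hv hw hk)

lemma Ld_y (Q : QNA K R N r) (S : Sk Q.x Q.act Q.h q)
    (hE : ∀ ξ k, Q.act ξ (Q.x k) = (ch X ξ k : K) • Q.x k)
    (η : Fin N → ℤ) (c y : Fin N → R) (hseq : IsPrimeSeq K Q η c y) (k : Fin N) :
    Ld Q.x (y k) (1 : K) (eb η k) ∧ ∀ l, IsPr η l k → ¬ deltaZero K Q k := by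
  induction k using WellFoundedLT.induction with
  | _ k ih =>
  have hB : ∀ l, IsPr η l k → ¬ deltaZero K Q k := by
    intro l hl hδ
    have hlk := Fin.lt_def.1 hl.1
    obtain ⟨k', hk'⟩ : ∃ k' : Fin N, (k' : ℕ) + 1 = k := ⟨⟨k - 1, by omega⟩, by simp; omega⟩
    have h1 := (hseq.prime_iff k' (y l)).2 ⟨l, by rw [Fin.le_def]; omega, fun l' h1 h2 => by
      rw [hl.2.1]
      exact hl.2.2 l' h1 (by rw [Fin.le_def] at h2; rw [Fin.lt_def]; omega), 1, by simp⟩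
    rw [hk'] at h1
    obtain ⟨h2, f, hf⟩ := h1
    have h3 := prime_up S Q.pbw (ch X) hE k hδ (y l) h2 f hf
    obtain ⟨l', h4, h5, t, h6⟩ := (hseq.prime_iff k (y l)).1 ⟨h3, f, hf⟩
    have hne : l' ≠ l := by
      rintro rfl
      exact h5 k hl.1 le_rfl hl.2.1.symm
    have hLl := (ih l hl.1).1
    rcases lt_or_eq_of_le h4 with h7 | h7
    · have h8 := ((ih l' h7).1).smul (t : K)
      rw [← h6] at h8
      exact hne (eb_inj η (h8.exp_eq Q.pbw hLl (by simp) one_ne_zero))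
    · subst h7
      have h8 := (Ld_x (K := K) (x := Q.x) l').smul (t : K)
      rw [← hseq.rec_delta_zero l' hδ, ← h6] at h8
      have h9 := congrFun (h8.exp_eq Q.pbw hLl (by simp) one_ne_zero) l'
      rw [eb_zero η hl.1] at h9
      simp at h9
  refine ⟨?_, hB⟩
  rcases pr_or η k with ⟨l, hl⟩ | hno
  · have hδ := hB l hl
    have h1 := hseq.rec_delta_ne k hδ
    rw [predIdx_pr η hl, WithBot.recBotCoe_coe] at h1
    have h2 := S.Ld_mul (ih l hl.1).1 (Ld_x k)
    rw [← eb_pr η hl, kap_eq_one] at h2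
    · have h3 := h2.sub (Ld_of_mem S (hseq.c_mem k hδ) (sb_eb η (Nat.lt_succ_self _))
        (by rw [eb_self]; exact one_ne_zero))
      rw [h1]
      simpa using h3
    · intro i j hi hj
      have : j = k := by by_contra hc; simp [hc] at hj
      subst this
      by_contra hc
      exact hi (eb_zero η (hl.1.trans (not_le.1 hc)))
  · rw [eb_nopr η hno]
    by_cases hδ : deltaZero K Q k
    · rw [hseq.rec_delta_zero k hδ]; exact Ld_x k
    · have h1 := hseq.rec_delta_ne k hδ
      rw [predIdx_nopr η hno, WithBot.recBotCoe_bot, one_mul] at h1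
      rw [h1]
      have h3 := (Ld_x (K := K) (x := Q.x) k).sub (Ld_of_mem S (hseq.c_mem k hδ)
        (sb_single k 1) (by simp))
      simpa using h3

end Weights

section Final

variable {K : Type u} [Field K] {R : Type v} [Ring R] [Algebra K R] {r N : ℕ}
variable {q : Fin N → Fin N → Kˣ} {X : Fin N → Fin r → ℤ}

lemma om_kap (lam2 : Fin N → Fin N → Kˣ) (hq : ∀ k l, l < k → q k l = lam2 k l)
    (w : Fin N → ℕ) (n : Fin N) :
    om lam2 (fun j => (w j : ℤ)) n * kap q (sg n) w = kap q w (sg n) := by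
  rw [kap_sg]
  unfold om kap
  rw [← Finset.prod_mul_distrib]
  refine Finset.prod_congr rfl fun k _ => ?_
  rw [Finset.prod_eq_single n]
  · rcases lt_trichotomy k n with hk | hk | hk
    · simp [omegaEntry, lo, hk.ne, hk.not_gt, Fin.lt_def.1 hk, hq n k hk]
    · simp [omegaEntry, lo, hk]
    · simp [omegaEntry, lo, hk.ne', hk, (Fin.lt_def.1 hk).not_gt, hq k n hk]
  · intro j _ hj
    simp [hj]
  · simp

lemma eigen_mul {act : Torus K r →* (R ≃ₐ[K] R)} {f g : Fin r → ℤ} {a b : R}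
    (ha : IsEigenWith K act f a) (hb : IsEigenWith K act g b) :
    IsEigenWith K act (f + g) (a * b) := by
  intro ξ
  rw [map_mul, ha, hb, smul_mul_smul_comm, ← Units.val_mul, ← Finset.prod_mul_distrib]
  simp only [Pi.add_apply, zpow_add]

lemma eigen_sub {act : Torus K r →* (R ≃ₐ[K] R)} {f : Fin r → ℤ} {a b : R}
    (ha : IsEigenWith K act f a) (hb : IsEigenWith K act f b) :
    IsEigenWith K act f (a - b) := by
  intro ξ
  rw [map_sub, ha, hb, smul_sub]

lemma eigen_smul {act : Torus K r →* (R ≃ₐ[K] R)} {f : Fin r → ℤ} {a : R} (t : K)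
    (ha : IsEigenWith K act f a) : IsEigenWith K act f (t • a) := by
  intro ξ
  rw [map_smul, ha, smul_comm]

lemma wt_addN (X : Fin N → Fin r → ℤ) (u w : Fin N → ℕ) :
    wt X (fun j => ((u + w) j : ℤ)) = wt X (fun j => (u j : ℤ)) + wt X (fun j => (w j : ℤ)) := by
  funext i
  simp [wt, add_mul, Finset.sum_add_distrib]

lemma F3 (Q : QNA K R N r) (S : Sk Q.x Q.act Q.h q)
    (hE : ∀ ξ k, Q.act ξ (Q.x k) = (ch X ξ k : K) • Q.x k) (t : Kˣ)
    (ht : ∀ n : ℤ, t ^ n = 1 → n = 0)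
    (lam2 : Fin N → Fin N → Kˣ) (hq : ∀ k l, l < k → q k l = lam2 k l)
    (η : Fin N → ℤ) (c y : Fin N → R) (hseq : IsPrimeSeq K Q η c y) {k s : Fin N}
    (hp : IsPr η k s) :
    ∃ w : Fin N → ℕ, sb (s : ℕ) w ∧ wt X (fun j => (w j : ℤ)) = wt X (fun j => (eb η s j : ℤ)) ∧
      ¬ eb η k ≤ w ∧ ∀ n < s, ¬ eb η k ≤ w + sg n →
        om lam2 (fun j => (w j : ℤ)) n = om lam2 (fun j => (eb η s j : ℤ)) n := by
  have P := Q.pbw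
  have hLs := (Ld_y Q S hE η c y hseq s).1
  have hLk := (Ld_y Q S hE η c y hseq k).1
  have hδ := (Ld_y Q S hE η c y hseq s).2 k hp
  have hys := hseq.rec_delta_ne s hδ
  rw [predIdx_pr η hp, WithBot.recBotCoe_coe] at hys
  have hc := hseq.c_mem s hδ
  have hmono : Rsub K Q.x (s : ℕ) ≤ Rsub K Q.x ((s : ℕ) + 1) := Rsub_mono (Nat.le_succ _)
  have hyk : y k ∈ Rsub K Q.x (s : ℕ) := hLk.mem_Rsub (sb_eb η (Fin.lt_def.1 hp.1))
  have hyk0 : y k ≠ 0 := hLk.ne_zero P one_ne_zero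
  have hP := ((hseq.prime_iff s (y s)).2 ⟨s, le_rfl, fun l' h1 h2 => absurd h1 h2.not_gt, 1,
    by simp⟩).1
  obtain ⟨hysA, hys0, -, -, hnorm, hprime⟩ := hP
  have hes : IsEigenWith K Q.act (wt X (fun j => (eb η s j : ℤ))) (y s) := by
    obtain ⟨f, hf⟩ := hseq.homog s
    rwa [weight_eq hE P t ht hLs one_ne_zero hf] at hf
  have hek : IsEigenWith K Q.act (wt X (fun j => (eb η k j : ℤ))) (y k) := by
    obtain ⟨f, hf⟩ := hseq.homog k
    rwa [weight_eq hE P t ht hLk one_ne_zero hf] at hf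
  have hebs := eb_pr η hp
  have hce : IsEigenWith K Q.act (wt X (fun j => (eb η s j : ℤ))) (c s) := by
    have h1 := eigen_mul hek (mon_eigen hE (sg s))
    rw [← wt_addN, ← hebs, mon_sg, pow_one] at h1
    have h2 := eigen_sub h1 hes
    rwa [hys, sub_sub_cancel] at h2
  have hxs : Q.x s ∈ Rsub K Q.x ((s : ℕ) + 1) := x_mem (Nat.lt_succ_self _)
  have hnot : ∀ d ∈ Rsub K Q.x (s : ℕ), c s ≠ y k * d := by
    intro d hd hcd
    have h1 : y k * (Q.x s - d) = y s * 1 := by rw [mul_one, hys, hcd, mul_sub]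
    rcases hprime _ (hmono hyk) _ (Subalgebra.sub_mem _ hxs (hmono hd))
      ⟨1, Subalgebra.one_mem _, h1⟩ with ⟨e, he, h2⟩ | ⟨e, he, h2⟩
    · have he0 : e ≠ 0 := by
        rintro rfl
        rw [mul_zero] at h2
        exact hyk0 h2
      obtain ⟨v, hv, γ, hγ, hL⟩ := S.exists_Ld he he0
      have h3 := S.Ld_mul hLs hL
      rw [← h2] at h3
      have h4 := congrFun (h3.exp_eq P hLk (by simp [hγ]) one_ne_zero) s
      rw [eb_zero η hp.1, Pi.add_apply, eb_self] at h4
      omega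
    · have hLx : Ld Q.x (Q.x s - d) (1 : K) (sg s) := by
        have := (Ld_x (K := K) (x := Q.x) s).sub (Ld_of_mem S hd (sb_single s 1) (by simp))
        simpa using this
      have he0 : e ≠ 0 := by
        rintro rfl
        rw [mul_zero] at h2
        exact hLx.ne_zero P one_ne_zero h2
      obtain ⟨v, hv, γ, hγ, hL⟩ := S.exists_Ld he he0
      have h3 := S.Ld_mul hLs hL
      rw [← h2] at h3
      have h4 := congrFun (h3.exp_eq P hLx (by simp [hγ]) one_ne_zero) k
      rw [hebs, Pi.add_apply, Pi.add_apply, eb_self] at h4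
      simp [hp.1.ne] at h4
  let T : Set (Fin N → ℕ) := {w | ∃ d ∈ Rsub K Q.x (s : ℕ), ∃ β : K, β ≠ 0 ∧
    Ld Q.x (c s - y k * d) β w ∧
    IsEigenWith K Q.act (wt X (fun j => (eb η s j : ℤ))) (c s - y k * d)}
  have hT : T.Nonempty := by
    have h0 : c s ≠ 0 := by
      have := hnot 0 (Subalgebra.zero_mem _)
      rwa [mul_zero] at this
    obtain ⟨v, hv, γ, hγ, hL⟩ := S.exists_Ld hc h0
    exact ⟨v, 0, Subalgebra.zero_mem _, γ, hγ, by rwa [mul_zero, sub_zero],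
      by rwa [mul_zero, sub_zero]⟩
  obtain ⟨w, ⟨d, hd, β, hβ, hLw, hew⟩, hmin⟩ := rl_wf.has_min T hT
  have hc' : c s - y k * d ∈ Rsub K Q.x (s : ℕ) :=
    Subalgebra.sub_mem _ hc (Subalgebra.mul_mem _ hyk hd)
  have hsbw : sb (s : ℕ) w := by
    obtain ⟨v, hv, γ, hγ, hL⟩ := S.exists_Ld hc' (hLw.ne_zero P hβ)
    rwa [hL.exp_eq P hLw hγ hβ] at hv
  have hwt := weight_eq hE P t ht hLw hβ hew
  refine ⟨w, hsbw, hwt.symm, ?_, ?_⟩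
  · intro hle
    have hv : eb η k + (w - eb η k) = w := by
      funext j
      have : eb η k j ≤ w j := hle j
      simp only [Pi.add_apply, Pi.sub_apply]
      omega
    generalize w - eb η k = v at hv
    have hsbv : sb (s : ℕ) v := by
      intro j hj
      have h1 := congrFun hv j
      rw [Pi.add_apply, hsbw j hj] at h1
      omega
    have hm : ordMonomial Q.x v ∈ Rsub K Q.x (s : ℕ) := mon_mem Q.x _ _ hsbv
    have h1 := S.Ld_mul hLk (Ld_mon (K := K) (x := Q.x) v)
    rw [hv, one_mul, one_mul] at h1
    set κ := kap q (eb η k) v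
    have h2 := hLw.sub (h1.smul (β * ((κ⁻¹ : Kˣ) : K)))
    rw [mul_assoc, Units.inv_mul, mul_one, sub_self] at h2
    have h3 : c s - y k * d - (β * ((κ⁻¹ : Kˣ) : K)) • (y k * ordMonomial Q.x v) =
        c s - y k * (d + (β * ((κ⁻¹ : Kˣ) : K)) • ordMonomial Q.x v) := by
      rw [mul_add, mul_smul_comm, sub_sub]
    have hd2 := Subalgebra.add_mem _ hd (Subalgebra.smul_mem _ hm (β * ((κ⁻¹ : Kˣ) : K)))
    have he2 : IsEigenWith K Q.act (wt X (fun j => (eb η s j : ℤ)))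
        (c s - y k * d - (β * ((κ⁻¹ : Kˣ) : K)) • (y k * ordMonomial Q.x v)) := by
      apply eigen_sub hew
      apply eigen_smul
      rw [hwt, ← hv, wt_addN]
      exact eigen_mul hek (mon_eigen hE v)
    rw [h3] at h2 he2
    have h4 : c s - y k * (d + (β * ((κ⁻¹ : Kˣ) : K)) • ordMonomial Q.x v) ≠ 0 :=
      sub_ne_zero.2 (hnot _ hd2)
    obtain ⟨v', hv', γ, hγ, hL⟩ := exists_Ld_gen (ordMonomial Q.x) id Function.injective_id
      (fun _ => (1 : K)) (fun _ => one_ne_zero) Ld_mon {u | rl u w} _ h2.low h4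
    exact hmin v' ⟨_, hd2, γ, hγ, hL, he2⟩ hv'
  · intro n hn hnle
    have hn' := Fin.lt_def.1 hn
    have hxn : Q.x n ∈ Rsub K Q.x (s : ℕ) := x_mem hn'
    obtain ⟨b, hb, hbe⟩ := hnorm (Q.x n) (hmono hxn)
    have h1 := S.Ld_mul hLs (Ld_x n)
    have hyx0 : y s * Q.x n ≠ 0 := h1.ne_zero P (by simp)
    have hb0 : b ≠ 0 := by
      rintro rfl
      rw [zero_mul] at hbe
      exact hyx0 hbe
    obtain ⟨v, hv, θ, hθ, hLb⟩ := S.exists_Ld hb hb0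
    have h2 := S.Ld_mul hLb hLs
    rw [← hbe] at h2
    have h3 := h1.exp_eq P h2 (by simp) (by simp [hθ])
    rw [add_comm] at h3
    obtain rfl : sg n = v := add_right_cancel h3
    rw [add_comm] at h2
    have hco := h1.coeff_eq P h2
    have hbs : b ∈ Rsub K Q.x (s : ℕ) := hLb.mem_Rsub ((sb_single n 1).mono hn')
    have hδm := Q.stable s (Q.x n) hxn
    set D := skewDelta K Q.act Q.x Q.h s (Q.x n) with hD
    have hxx : Q.x s * Q.x n = (q s n : K) • (Q.x n * Q.x s) + D := by
      rw [hD, skewDelta, S.eig, smul_mul_assoc]; abel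
    have hexp : ((q s n : K) • (y k * Q.x n) - b * y k) * Q.x s =
        c s * Q.x n - y k * D - b * c s := by
      have h4 := hbe
      rw [hys, sub_mul, mul_assoc, hxx, mul_add, mul_sub, mul_smul_comm] at h4
      rw [sub_mul, smul_mul_assoc, mul_assoc (y k), mul_assoc b]
      have h5 : (q s n : K) • (y k * (Q.x n * Q.x s)) =
        b * (y k * Q.x s) - b * c s + c s * Q.x n - y k * D := by rw [← h4]; abel
      rw [h5]; abel
    have hA : (q s n : K) • (y k * Q.x n) - b * y k = 0 := by
      apply S.Dg_top P (k := s) (m := 1)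
      · exact Subalgebra.sub_mem _ (Subalgebra.smul_mem _ (Subalgebra.mul_mem _ hyk hxn) _)
          (Subalgebra.mul_mem _ hbs hyk)
      · rw [pow_one, hexp]
        have := Dg_mem (K := K) (x := Q.x) (k := s) (m := 1) (i := 0)
          (Subalgebra.sub_mem _ (Subalgebra.sub_mem _ (Subalgebra.mul_mem _ hc hxn)
            (Subalgebra.mul_mem _ hyk hδm)) (Subalgebra.mul_mem _ hbs hc)) Nat.zero_lt_one
        simpa using this
    rw [hA, zero_mul] at hexp
    have hbyk : b * y k = y k * ((q s n : K) • Q.x n) := by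
      rw [mul_smul_comm]; exact (sub_eq_zero.1 hA).symm
    set g := D - d * Q.x n + (q s n : K) • Q.x n * d with hg
    have hgm : g ∈ Rsub K Q.x (s : ℕ) :=
      Subalgebra.add_mem _ (Subalgebra.sub_mem _ hδm (Subalgebra.mul_mem _ hd hxn))
        (Subalgebra.mul_mem _ (Subalgebra.smul_mem _ hxn _) hd)
    have hdiff : (c s - y k * d) * Q.x n - b * (c s - y k * d) = y k * g := by
      have h5 : y k * D = c s * Q.x n - b * c s := by
        have : c s * Q.x n - b * c s - y k * D = 0 := by rw [hexp]; abel
        exact (sub_eq_zero.1 this).symm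
      rw [hg, mul_add, mul_sub (y k), h5, ← mul_assoc (y k) _ d, ← hbyk, sub_mul, mul_sub]
      simp only [mul_assoc]
      abel
    have h6 := S.Ld_mul hLw (Ld_x n)
    have h7 := S.Ld_mul hLb hLw
    rw [add_comm (sg n)] at h7
    have h8 := h6.sub h7
    rw [hdiff] at h8
    have h9 : β * 1 * (kap q w (sg n) : K) - θ * β * (kap q (sg n) w : K) = 0 := by
      by_contra hne
      have hyg := h8.ne_zero P hne
      have hg0 : g ≠ 0 := by
        intro h0
        rw [h0, mul_zero] at hyg
        exact hyg rfl
      obtain ⟨v, hv, γ, hγ, hLg⟩ := S.exists_Ld hgm hg0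
      have h10 := (S.Ld_mul hLk hLg).exp_eq P h8 (by simp [hγ]) hne
      apply hnle
      rw [← h10]
      exact le_self_add
    have e1 := congrArg (Units.val) (om_kap lam2 hq w n)
    have e2 := congrArg (Units.val) (om_kap lam2 hq (eb η s) n)
    rw [Units.val_mul] at e1 e2
    have e3 : ((om lam2 (fun j => (w j : ℤ)) n : Kˣ) : K) = θ := by
      apply mul_right_cancel₀ (Units.ne_zero (kap q (sg n) w))
      rw [e1]
      apply mul_left_cancel₀ hβ
      linear_combination h9
    have e4 : ((om lam2 (fun j => (eb η s j : ℤ)) n : Kˣ) : K) = θ := by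
      apply mul_right_cancel₀ (Units.ne_zero (kap q (sg n) (eb η s)))
      rw [e2]
      linear_combination hco
    exact Units.ext (e3.trans e4.symm)

lemma nr_unit {a : Kˣ} (h : ∀ n : ℕ, n ≠ 0 → (a : K) ^ n ≠ 1) (n : ℤ) (hn : a ^ n = 1) : n = 0 := by
  by_contra hne
  have h1 : a ^ n.natAbs = 1 := by
    rcases Int.natAbs_eq n with h2 | h2
    · rw [h2, zpow_natCast] at hn; exact hn
    · rw [h2, zpow_neg, inv_eq_one, zpow_natCast] at hn; exact hn
  apply h n.natAbs (Int.natAbs_ne_zero.2 hne)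
  rw [← Units.val_pow_eq_pow_val, h1, Units.val_one]

lemma smul_inj_of {a : R} (ha : a ≠ 0) {s t : K} (h : s • a = t • a) : s = t := by
  by_contra hne
  apply ha
  have : (s - t) • a = 0 := by rw [sub_smul, h, sub_self]
  rw [← one_smul K a, ← inv_mul_cancel₀ (sub_ne_zero.2 hne), mul_smul, this, smul_zero]

theorem exch_main (S : SymQNA K R N r) (lam2 : Fin N → Fin N → Kˣ)
    (hlam2 : ∀ k l : Fin N, l < k → S.act (S.h k) (S.x l) = ((lam2 k l : Kˣ) : K) • S.x l)
    (η : Fin N → ℤ) (c y : Fin N → R) (hseq : IsPrimeSeq K S.toQNA η c y)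
    (chiy : Fin N → Fin r → ℤ) (hchiy : ∀ l : Fin N, IsEigenWith K S.act (chiy l) (y l)) :
    ∃! B : Fin N → Fin N → ℤ, IsExchangeMatrix K lam2 η S.lamstar chiy B := by
  choose X hX using S.eigenvec
  have hE : ∀ ξ k, S.act ξ (S.x k) = (ch X ξ k : K) • S.x k := fun ξ k => hX k ξ
  have P := S.pbw
  have hx0 : ∀ k, S.x k ≠ 0 := fun k => (Ld_x (K := K) (x := S.x) k).ne_zero P one_ne_zero
  have Sq : Sk S.x S.act S.h (fun i j => ch X (S.h i) j) := ⟨fun i j => hE _ _, S.stable⟩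
  have hq : ∀ k l, l < k → ch X (S.h k) l = lam2 k l := fun k l hl =>
    Units.ext (smul_inj_of (hx0 l) ((hE _ _).symm.trans (hlam2 k l hl)))
  have hlam : ∀ k, (ch X (S.h k) k : K) = S.lam k := fun k =>
    smul_inj_of (hx0 k) ((hE _ _).symm.trans (S.hx k))
  have hlams : ∀ k, (ch X (S.hstar k) k : K) = S.lamstar k := fun k =>
    smul_inj_of (hx0 k) ((hE _ _).symm.trans (S.hxstar k))
  have hnr : ∀ k (n : ℤ), ch X (S.h k) k ^ n = 1 → n = 0 := fun k =>
    nr_unit (by rw [hlam]; exact S.lam_not_root k)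
  have hnrs : ∀ k (n : ℤ), ch X (S.hstar k) k ^ n = 1 → n = 0 := fun k =>
    nr_unit (by rw [hlams]; exact S.lamstar_not_root k)
  have hrev : ∀ m n : Fin N, m < n → ch X (S.hstar m) n = (lam2 n m)⁻¹ := by
    intro m n hmn
    have := rev_eig Sq P S.hstar (fun i j => ch X (S.hstar i) j) (fun i j => hE _ _)
      S.stableRev hmn
    rw [← hq n m hmn]
    exact eq_inv_of_mul_eq_one_left this
  have hone : ∀ f : Fin N → ℤ, wt X f = 0 → ∀ ξ : Torus K r, ∏ k, ch X ξ k ^ f k = 1 := by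
    intro f hf ξ
    rw [prod_ch, hf]
    simp
  have D : Data lam2 η (fun k => ch X (S.h k) k) (fun k => ch X (S.hstar k) k) X := by
    refine ⟨hnr, hnrs, ?_, ?_, ?_⟩
    · intro f m hf hm
      have h1 := hone f hf (S.h m)
      have h2 : om lam2 f m * ∏ k, ch X (S.h m) k ^ f k = ch X (S.h m) m ^ f m := by
        unfold om
        rw [← Finset.prod_mul_distrib, Finset.prod_eq_single m]
        · simp [omegaEntry]
        · intro k _ hk
          rcases lt_or_gt_of_ne hk with h3 | h3
          · simp [omegaEntry, hk, h3.not_gt, hq m k h3]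
          · simp [hm k h3]
        · simp
      rwa [h1, mul_one] at h2
    · intro f m hf hm
      have h1 := hone f hf (S.hstar m)
      have h2 : om lam2 f m * ∏ k, ch X (S.hstar m) k ^ f k = ch X (S.hstar m) m ^ f m := by
        unfold om
        rw [← Finset.prod_mul_distrib, Finset.prod_eq_single m]
        · simp [omegaEntry]
        · intro k _ hk
          rcases lt_or_gt_of_ne hk with h3 | h3
          · simp [hm k h3]
          · simp [omegaEntry, hk, h3, hrev m k h3]
        · simp
      rwa [h1, mul_one] at h2
    · intro k s hp
      obtain ⟨w, h1, h2, h3, h4⟩ := F3 S.toQNA Sq hE (ch X (S.h s) s) (hnr s) lam2 hq η c y hseq hp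
      rw [eb_cast] at h2 h4
      have hcast : ∀ v : Fin N → ℕ, (∃ l, ((v l : ℕ) : ℤ) < ebar η k l) ↔ ¬ eb η k ≤ v := by
        intro v
        rw [Pi.le_def, not_forall]
        refine exists_congr fun l => ?_
        rw [← eb_cast, not_le, Nat.cast_lt]
      refine ⟨fun j => (w j : ℤ), fun j => by positivity, fun j hj => ?_, h2, (hcast w).2 h3,
        fun n hn hl => h4 n hn ((hcast _).1 ?_)⟩
      · simp [h1 j hj]
      · obtain ⟨l, hl⟩ := hl
        refine ⟨l, lt_of_eq_of_lt ?_ hl⟩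
        simp only [Pi.add_apply, Pi.single_apply, Nat.cast_add]
        split_ifs <;> simp
  refine D.main chiy (fun l => ?_) S.lamstar (fun k => (hlams k).symm)
  have := weight_eq hE P (ch X (S.h l) l) (hnr l) (Ld_y S.toQNA Sq hE η c y hseq l).1
    one_ne_zero (hchiy l)
  rwa [eb_cast] at this

end Final

/-- **Existence and uniqueness of the exchange matrix.**
For every symmetric quantum nilpotent algebra `R` of dimension `N` satisfying conditions
(A) and (B), there is a unique matrix `B̃ ∈ M_{N×ex}(ℤ)` whose columns satisfy
`Ω(Σ_l b_{lk} ē_l, ē_n) = λ*_n` for `k = n` and `= 1` for `k ≠ n`, and such that the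
products `y_1^{b_{1k}} ⋯ y_N^{b_{Nk}}` are fixed under `H`, for all `k ∈ ex`. -/
theorem exchange_matrix_exists_unique
    {K : Type u} [Field K] {R : Type v} [Ring R] [Algebra K R] {N r : ℕ}
    (S : SymQNA K R N r)
    (lam2 : Fin N → Fin N → Kˣ)
    (hlam2 : ∀ k l : Fin N, l < k → S.act (S.h k) (S.x l) = ((lam2 k l : Kˣ) : K) • S.x l)
    (η : Fin N → ℤ) (c y : Fin N → R) (hseq : IsPrimeSeq K S.toQNA η c y)
    (chiy : Fin N → Fin r → ℤ) (hchiy : ∀ l : Fin N, IsEigenWith K S.act (chiy l) (y l))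
    (hA : CondA K lam2) (hB : CondB K η S.lamstar) :
    ∃! B : Fin N → Fin N → ℤ, IsExchangeMatrix K lam2 η S.lamstar chiy B := by
  exact exch_main S lam2 hlam2 η c y hseq chiy hchiy
end
end

section
/- Let R be a symmetric quantum nilpotent algebra of dimension N and let τ ∈ Ξ_N. Then R has the presentation R = K[x_{τ(1)}][x_{τ(2)}; σ''_{τ(2)}, δ''_{τ(2)}]⋯[x_{τ(N)}; σ''_{τ(N)}, δ''_{τ(N)}], where σ''_{τ(k)} := σ_{τ(k)} and δ''_{τ(k)} := δ_{τ(k)} if τ(k) = max τ([1,k−1]) + 1, while σ''_{τ(k)} := σ*_{τ(k)} and δ''_{τ(k)} := δ*_{τ(k)} if τ(k) = min τ([1,k−1]) − 1; and this presentation satisfies the quantum nilpotent algebra axioms (a)–(c) for the elements h''_{τ(k)} ∈ H given by h''_{τ(k)} := h_{τ(k)} in the first case and h''_{τ(k)} := h*_{τ(k)} in the second case. -/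
open scoped BigOperators

noncomputable section

universe u v

/-- The subset `Ξ_N ⊆ S_N` of permutations `τ` such that `τ([1,k])` is an interval
for all `k`; equivalently, for each `k ≥ 2` either `τ(k) = max τ([1,k-1]) + 1` or
`τ(k) = min τ([1,k-1]) − 1`. -/
def InXi {N : ℕ} (τ : Equiv.Perm (Fin N)) : Prop :=
  ∀ k a b : Fin N, a ≤ k → b ≤ k → ∀ j : Fin N, τ a ≤ j → j ≤ τ b →
    ∃ c : Fin N, c ≤ k ∧ τ c = j

/-- For `τ ∈ Ξ_N` and `2 ≤ k`, `τ(k) = max τ([1,k-1]) + 1` (case (1) of the text). -/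
def XiCaseMax {N : ℕ} (τ : Equiv.Perm (Fin N)) (k : Fin N) : Prop :=
  ∀ l : Fin N, l < k → τ l < τ k
section Helpers

variable {K : Type u} [Field K] {R : Type v} [Ring R] [Algebra K R] {r N : ℕ}

/-- Monomial along a list. -/
def lmon (x : Fin N → R) (L : List (Fin N)) (m : Fin N → ℕ) : R :=
  (L.map fun k => x k ^ m k).prod

theorem lmon_eq_one (x : Fin N → R) (L : List (Fin N)) (m : Fin N → ℕ)
    (h : ∀ j ∈ L, m j = 0) : lmon x L m = 1 := by
  unfold lmon
  apply List.prod_eq_one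
  intro y hy
  obtain ⟨j, hj, rfl⟩ := List.mem_map.1 hy
  rw [h j hj, pow_zero]

theorem lmon_congr (x : Fin N → R) (L : List (Fin N)) (m m' : Fin N → ℕ)
    (h : ∀ j ∈ L, m j = m' j) : lmon x L m = lmon x L m' := by
  unfold lmon
  congr 1
  apply List.map_congr_left
  intro j hj
  rw [h j hj]

theorem lmon_cons (x : Fin N → R) (a : Fin N) (L : List (Fin N)) (m : Fin N → ℕ) :
    lmon x (a :: L) m = x a ^ m a * lmon x L m := by
  simp [lmon]

theorem lmon_update_right (x : Fin N → R) (rel : Fin N → Fin N → Prop)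
    (hirr : ∀ a, ¬ rel a a) (k : Fin N) (n : ℕ) (m : Fin N → ℕ)
    (hk : m k = 0) (hm : ∀ j, rel k j → m j = 0) (L : List (Fin N)) (hL : L.Pairwise rel)
    (hkL : k ∈ L) :
    lmon x L (Function.update m k n) = lmon x L m * x k ^ n := by
  induction L with
  | nil => simp at hkL
  | cons a L ih =>
    rw [List.pairwise_cons] at hL
    rw [lmon_cons, lmon_cons]
    by_cases ha : a = k
    · subst ha
      have hne : ∀ j ∈ L, j ≠ a := fun j hj h => hirr a (by have := hL.1 j hj; rwa [h] at this)
      rw [lmon_eq_one x L m (fun j hj => hm j (hL.1 j hj)), lmon_eq_one x L, hk]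
      · simp
      · intro j hj
        rw [Function.update_of_ne (hne j hj)]
        exact hm j (hL.1 j hj)
    · have hkL' : k ∈ L := by
        rcases List.mem_cons.1 hkL with h | h
        · exact absurd h.symm ha
        · exact h
      rw [ih hL.2 hkL', Function.update_of_ne ha, mul_assoc]

theorem lmon_update_left (x : Fin N → R) (rel : Fin N → Fin N → Prop)
    (hirr : ∀ a, ¬ rel a a) (k : Fin N) (n : ℕ) (m : Fin N → ℕ)
    (hk : m k = 0) (hm : ∀ j, rel j k → m j = 0) (L : List (Fin N)) (hL : L.Pairwise rel)
    (hkL : k ∈ L) :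
    lmon x L (Function.update m k n) = x k ^ n * lmon x L m := by
  induction L with
  | nil => simp at hkL
  | cons a L ih =>
    rw [List.pairwise_cons] at hL
    rw [lmon_cons, lmon_cons]
    by_cases ha : a = k
    · subst ha
      have hne : ∀ j ∈ L, j ≠ a := fun j hj h => hirr a (by have := hL.1 j hj; rwa [h] at this)
      rw [lmon_congr x L (Function.update m a n) m
        (fun j hj => Function.update_of_ne (hne j hj) _ _), hk]
      simp
    · have hkL' : k ∈ L := by
        rcases List.mem_cons.1 hkL with h | h
        · exact absurd h.symm ha
        · exact h
      rw [ih hL.2 hkL', Function.update_of_ne ha, hm a (hL.1 k hkL')]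
      simp

variable (K) in
/-- Span of the monomials along `L` supported on `I`. -/
def MS (x : Fin N → R) (L : List (Fin N)) (I : Set (Fin N)) : Submodule K R :=
  Submodule.span K (lmon x L '' {m | ∀ j, j ∉ I → m j = 0})

theorem MS_mul_pow_right (x : Fin N → R) (rel : Fin N → Fin N → Prop)
    (hirr : ∀ a, ¬ rel a a) (hasym : ∀ a b, rel a b → ¬ rel b a)
    (L : List (Fin N)) (hL : L.Pairwise rel) (hc : ∀ k, k ∈ L)
    (I : Set (Fin N)) (k : Fin N) (hI : ∀ j ∈ I, rel j k) (a : R) (ha : a ∈ MS K x L I) (n : ℕ) :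
    a * x k ^ n ∈ MS K x L (insert k I) := by
  unfold MS at ha
  induction ha using Submodule.span_induction with
  | mem y hy =>
    obtain ⟨m, hm, rfl⟩ := hy
    rw [← lmon_update_right x rel hirr k n m (hm k fun h => hirr k (hI k h))
      (fun j hj => hm j fun h => hasym _ _ hj (hI j h)) L hL (hc k)]
    apply Submodule.subset_span
    refine ⟨_, ?_, rfl⟩
    intro j hj
    rw [Set.mem_insert_iff, not_or] at hj
    rw [Function.update_of_ne hj.1]
    exact hm j hj.2
  | zero => simp
  | add a b _ _ ha hb => rw [add_mul]; exact add_mem ha hb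
  | smul c a _ ha => rw [smul_mul_assoc]; exact Submodule.smul_mem _ _ ha

theorem MS_mul_pow_left (x : Fin N → R) (rel : Fin N → Fin N → Prop)
    (hirr : ∀ a, ¬ rel a a) (hasym : ∀ a b, rel a b → ¬ rel b a)
    (L : List (Fin N)) (hL : L.Pairwise rel) (hc : ∀ k, k ∈ L)
    (I : Set (Fin N)) (k : Fin N) (hI : ∀ j ∈ I, rel k j) (a : R) (ha : a ∈ MS K x L I) (n : ℕ) :
    x k ^ n * a ∈ MS K x L (insert k I) := by
  unfold MS at ha
  induction ha using Submodule.span_induction with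
  | mem y hy =>
    obtain ⟨m, hm, rfl⟩ := hy
    rw [← lmon_update_left x rel hirr k n m (hm k fun h => hirr k (hI k h))
      (fun j hj => hm j fun h => hasym _ _ hj (hI j h)) L hL (hc k)]
    apply Submodule.subset_span
    refine ⟨_, ?_, rfl⟩
    intro j hj
    rw [Set.mem_insert_iff, not_or] at hj
    rw [Function.update_of_ne hj.1]
    exact hm j hj.2
  | zero => simp
  | add a b _ _ ha hb => rw [mul_add]; exact add_mem ha hb
  | smul c a _ ha => rw [mul_smul_comm]; exact Submodule.smul_mem _ _ ha

/-- One Ore extension step. -/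
structure OreStep (A : Subalgebra K R) (y : R) (σ : R ≃ₐ[K] R) : Prop where
  map : ∀ a ∈ A, σ a ∈ A
  map_symm : ∀ a ∈ A, σ.symm a ∈ A
  delta : ∀ a ∈ A, y * a - σ a * y ∈ A

theorem ore_right (A : Subalgebra K R) (y : R) (σ : R ≃ₐ[K] R) (h : OreStep A y σ)
    (W : Submodule K R) (hW : ∀ a ∈ A, ∀ n : ℕ, a * y ^ n ∈ W) (z : R)
    (hz : z ∈ Algebra.adjoin K (insert y (A : Set R))) : z ∈ W := by
  suffices H : z ∈ Submodule.span K {w | ∃ a ∈ A, ∃ n : ℕ, w = a * y ^ n} by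
    refine (Submodule.span_le.2 ?_) H
    rintro _ ⟨a, ha, n, rfl⟩
    exact hW a ha n
  set M := Submodule.span K {w | ∃ a ∈ A, ∃ n : ℕ, w = a * y ^ n} with hM
  have hsub : ∀ a ∈ A, ∀ n : ℕ, a * y ^ n ∈ M :=
    fun a ha n => Submodule.subset_span ⟨a, ha, n, rfl⟩
  have key : ∀ w ∈ M, z * w ∈ M := by
    induction hz using Algebra.adjoin_induction with
    | mem t ht =>
      intro w hw
      rw [hM] at hw
      induction hw using Submodule.span_induction with
      | mem w hw =>
        obtain ⟨a, ha, n, rfl⟩ := hw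
        rcases ht with rfl | ht
        · have : t * (a * t ^ n) = σ a * t ^ (n + 1) + (t * a - σ a * t) * t ^ n := by
            rw [pow_succ']; noncomm_ring
          rw [this]
          exact add_mem (hsub _ (h.map a ha) _) (hsub _ (h.delta a ha) _)
        · rw [← mul_assoc]
          exact hsub _ (A.mul_mem ht ha) _
      | zero => simp
      | add a b _ _ ha hb => rw [mul_add]; exact add_mem ha hb
      | smul c a _ ha => rw [mul_smul_comm]; exact Submodule.smul_mem _ _ ha
    | algebraMap c =>
      intro w hw
      rw [← Algebra.smul_def]
      exact Submodule.smul_mem _ _ hw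
    | add a b _ _ ha hb => intro w hw; rw [add_mul]; exact add_mem (ha w hw) (hb w hw)
    | mul a b _ _ ha hb => intro w hw; rw [mul_assoc]; exact ha _ (hb w hw)
  have := key 1 (by simpa using hsub 1 A.one_mem 0)
  simpa using this

theorem ore_left (A : Subalgebra K R) (y : R) (σ : R ≃ₐ[K] R) (h : OreStep A y σ)
    (W : Submodule K R) (hW : ∀ a ∈ A, ∀ n : ℕ, y ^ n * a ∈ W) (z : R)
    (hz : z ∈ Algebra.adjoin K (insert y (A : Set R))) : z ∈ W := by
  suffices H : z ∈ Submodule.span K {w | ∃ a ∈ A, ∃ n : ℕ, w = y ^ n * a} by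
    refine (Submodule.span_le.2 ?_) H
    rintro _ ⟨a, ha, n, rfl⟩
    exact hW a ha n
  set M := Submodule.span K {w | ∃ a ∈ A, ∃ n : ℕ, w = y ^ n * a} with hM
  have hsub : ∀ a ∈ A, ∀ n : ℕ, y ^ n * a ∈ M :=
    fun a ha n => Submodule.subset_span ⟨a, ha, n, rfl⟩
  have key : ∀ w ∈ M, w * z ∈ M := by
    induction hz using Algebra.adjoin_induction with
    | mem t ht =>
      intro w hw
      rw [hM] at hw
      induction hw using Submodule.span_induction with
      | mem w hw =>
        obtain ⟨a, ha, n, rfl⟩ := hw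
        rcases ht with rfl | ht
        · have h1 : t ^ n * a * t = t ^ (n + 1) * σ.symm a -
              t ^ n * (t * σ.symm a - σ (σ.symm a) * t) := by
            rw [pow_succ, AlgEquiv.apply_symm_apply]; noncomm_ring
          rw [h1]
          exact sub_mem (hsub _ (h.map_symm a ha) _) (hsub _ (h.delta _ (h.map_symm a ha)) _)
        · rw [mul_assoc]
          exact hsub _ (A.mul_mem ha ht) _
      | zero => simp
      | add a b _ _ ha hb => rw [add_mul]; exact add_mem ha hb
      | smul c a _ ha => rw [smul_mul_assoc]; exact Submodule.smul_mem _ _ ha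
    | algebraMap c =>
      intro w hw
      rw [← Algebra.commutes, ← Algebra.smul_def]
      exact Submodule.smul_mem _ _ hw
    | add a b _ _ ha hb => intro w hw; rw [mul_add]; exact add_mem (ha w hw) (hb w hw)
    | mul a b _ _ ha hb => intro w hw; rw [← mul_assoc]; exact hb _ (ha w hw)
  have := key 1 (by simpa using hsub 1 A.one_mem 0)
  simpa using this

/-- The subalgebras attached to a permutation are spanned by monomials in a given order. -/
theorem Rsub_le_MS (x : Fin N → R) (rel : Fin N → Fin N → Prop)
    (hirr : ∀ a, ¬ rel a a) (hasym : ∀ a b, rel a b → ¬ rel b a)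
    (L : List (Fin N)) (hL : L.Pairwise rel) (hc : ∀ k, k ∈ L)
    (τ : Equiv.Perm (Fin N))
    (hτ : ∀ k, (∀ l < k, rel (τ l) (τ k)) ∨ (∀ l < k, rel (τ k) (τ l)))
    (hore : ∀ k : Fin N, ∃ σ, OreStep (Rsub K (fun i => x (τ i)) (k : ℕ)) (x (τ k)) σ) (n : ℕ)
    (hn : n ≤ N) : ∀ a ∈ Rsub K (fun i => x (τ i)) n,
      a ∈ MS K x L (τ '' {l | (l : ℕ) < n}) := by
  induction n with
  | zero =>
    intro a ha
    have : a ∈ (⊥ : Subalgebra K R) := by simpa [Rsub] using ha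
    obtain ⟨c, rfl⟩ := Algebra.mem_bot.1 this
    rw [Algebra.algebraMap_eq_smul_one]
    apply Submodule.smul_mem
    apply Submodule.subset_span
    exact ⟨0, by intro j _; rfl, lmon_eq_one x L 0 (by simp)⟩
  | succ n ih =>
    intro a ha
    have ih := ih (by omega)
    let k : Fin N := ⟨n, by omega⟩
    have hset : {l : Fin N | (l : ℕ) < n + 1} = insert k {l : Fin N | (l : ℕ) < n} := by
      ext l
      simp only [Set.mem_ofPred_eq, Set.mem_insert_iff, Fin.ext_iff, k]
      omega
    obtain ⟨σ, hσ⟩ := hore k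
    have ha' : a ∈ Algebra.adjoin K
        (insert (x (τ k)) (Rsub K (fun i => x (τ i)) (k : ℕ) : Set R)) := by
      refine Algebra.adjoin_mono ?_ ha
      rw [hset, Set.image_insert_eq]
      exact Set.insert_subset_insert Algebra.subset_adjoin
    rw [hset, Set.image_insert_eq]
    rcases hτ k with h | h
    · refine ore_right _ _ _ hσ _ (fun b hb m => ?_) a ha'
      refine MS_mul_pow_right x rel hirr hasym L hL hc _ _ ?_ b (ih b hb) m
      rintro _ ⟨l, hl, rfl⟩
      exact h l hl
    · refine ore_left _ _ _ hσ _ (fun b hb m => ?_) a ha'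
      refine MS_mul_pow_left x rel hirr hasym L hL hc _ _ ?_ b (ih b hb) m
      rintro _ ⟨l, hl, rfl⟩
      exact h l hl

/-- Right freeness of powers. -/
theorem powers_free (x : Fin N → R) (rel : Fin N → Fin N → Prop)
    (hirr : ∀ a, ¬ rel a a) (hasym : ∀ a b, rel a b → ¬ rel b a)
    (L : List (Fin N)) (hL : L.Pairwise rel) (hc : ∀ k, k ∈ L)
    (hli : LinearIndependent K (lmon x L))
    (I : Set (Fin N)) (k : Fin N) (hI : ∀ j ∈ I, rel j k)
    (A : Subalgebra K R) (hA : ∀ a ∈ A, a ∈ MS K x L I) :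
    LinearIndependent A (fun n : ℕ => x k ^ n) := by
  rw [linearIndependent_iff']
  intro s g hg i hi
  have hkI : k ∉ I := fun h => hirr k (hI k h)
  have hex : ∀ n, ∃ c ∈ Finsupp.supported K K {m : Fin N → ℕ | ∀ j, j ∉ I → m j = 0},
      Finsupp.linearCombination K (lmon x L) c = (g n : R) := fun n =>
    (Finsupp.mem_span_image_iff_linearCombination K).1 (hA _ (g n).2)
  choose c hcs hcg using hex
  have hterm : ∀ n, Finsupp.linearCombination K (lmon x L)
      ((c n).mapDomain fun m => Function.update m k n) = (g n : R) * x k ^ n := by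
    intro n
    rw [Finsupp.linearCombination_mapDomain, ← hcg n, Finsupp.linearCombination_apply,
      Finsupp.linearCombination_apply, Finsupp.sum, Finsupp.sum, Finset.sum_mul]
    apply Finset.sum_congr rfl
    intro m hm
    have hm' := hcs n hm
    simp only [Function.comp]
    rw [lmon_update_right x rel hirr k n m (hm' k hkI)
      (fun j hj => hm' j fun h => hasym _ _ hj (hI j h)) L hL (hc k), smul_mul_assoc]
  have hzero : ∑ n ∈ s, (c n).mapDomain (fun m => Function.update m k n) = 0 := by
    apply (linearIndependent_iff.1 hli)
    rw [map_sum, ← hg]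
    exact Finset.sum_congr rfl fun n _ => hterm n
  have hci : (c i).mapDomain (fun m => Function.update m k i) = 0 := by
    ext m
    by_cases hmk : m k = i
    · have h0 := DFunLike.congr_fun hzero m
      rw [Finsupp.finsetSum_apply, Finset.sum_eq_single i] at h0
      · exact h0
      · intro n _ hn
        apply Finsupp.mapDomain_of_notMem_range
        rintro ⟨m', rfl⟩
        simp at hmk
        exact hn hmk
      · intro h; exact absurd hi h
    · rw [Finsupp.mapDomain_of_notMem_range]
      · rfl
      · rintro ⟨m', rfl⟩
        simp at hmk
  have hgi : (g i : R) * x k ^ i = 0 := by rw [← hterm i, hci, map_zero]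
  have hci0 : c i = 0 := by
    ext m
    by_contra hm
    have hms : m ∈ (c i).support := by simpa using hm
    have hinj : Set.InjOn (fun m : Fin N → ℕ => Function.update m k i)
        {m : Fin N → ℕ | ∀ j, j ∉ I → m j = 0} := by
      intro m1 h1 m2 h2 h12
      ext j
      by_cases hj : j = k
      · subst hj; rw [h1 j hkI, h2 j hkI]
      · have := congrFun h12 j
        simpa [Function.update_of_ne hj] using this
    have := Finsupp.mapDomain_apply' _ (c i) (hcs i) hinj (hcs i hms)
    rw [hci] at this
    exact hm this.symm
  apply Subtype.ext
  rw [← hcg i, hci0]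
  simp

/-- PBW from freeness at every step. -/
theorem pbw_of_free [Nontrivial R] (n : ℕ) : ∀ (y : Fin n → R),
    (∀ k : Fin n, LinearIndependent (Rsub K y (k : ℕ)) (fun m : ℕ => y k ^ m)) →
    LinearIndependent K (ordMonomial (R := R) y) := by
  induction n with
  | zero =>
    intro y _
    rw [linearIndependent_unique_iff]
    simp [ordMonomial]
  | succ n ih =>
    intro y hy
    let y' : Fin n → R := fun i => y i.castSucc
    have hR : ∀ m ≤ n, Rsub K y' m = Rsub K y m := by
      intro m hm
      unfold Rsub
      congr 1
      ext z
      constructor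
      · rintro ⟨l, hl, rfl⟩
        exact ⟨l.castSucc, hl, rfl⟩
      · rintro ⟨l, hl, rfl⟩
        have hl' : (l : ℕ) < m := hl
        exact ⟨⟨l, by omega⟩, hl, rfl⟩
    have h1 := ih y' (by
      intro k
      rw [hR k (by omega)]
      exact hy k.castSucc)
    let A := Rsub K y n
    have hmem : ∀ m, ordMonomial (R := R) y' m ∈ A := by
      intro m
      apply Subalgebra.list_prod_mem
      intro z hz
      obtain ⟨k, _, rfl⟩ := List.mem_map.1 hz
      apply pow_mem
      exact Algebra.subset_adjoin ⟨k.castSucc, k.2, rfl⟩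
    have h2 : LinearIndependent K (fun m => (⟨ordMonomial (R := R) y' m, hmem m⟩ : A)) :=
      LinearIndependent.of_comp A.val.toLinearMap h1
    have h3 : LinearIndependent A (fun m : ℕ => y (Fin.last n) ^ m) := hy (Fin.last n)
    have h4 := linearIndependent_smul h2 h3
    let e : (Fin (n + 1) → ℕ) → (Fin n → ℕ) × ℕ := fun m => (fun i => m i.castSucc, m (Fin.last n))
    have he : Function.Injective e := by
      intro m1 m2 h
      ext j
      refine Fin.lastCases ?_ (fun i => ?_) j
      · exact congrArg Prod.snd h
      · exact congrFun (congrArg Prod.fst h) i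
    have h5 := h4.comp e he
    convert h5 using 1
    ext m
    simp [ordMonomial, List.finRange_succ_last, e, y', Function.comp_def, Subalgebra.smul_def]

/-- The torus preserves subalgebras generated by eigenvectors. -/
theorem act_mem (x : Fin N → R) (act : Torus K r →* (R ≃ₐ[K] R))
    (he : ∀ k : Fin N, ∃ f : Fin r → ℤ, IsEigenWith K act f (x k))
    (T : Set (Fin N)) (ξ : Torus K r) (a : R) (ha : a ∈ Algebra.adjoin K (x '' T)) :
    act ξ a ∈ Algebra.adjoin K (x '' T) := by
  induction ha using Algebra.adjoin_induction with
  | mem t ht =>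
    obtain ⟨l, hl, rfl⟩ := ht
    obtain ⟨f, hf⟩ := he l
    rw [hf ξ]
    exact Subalgebra.smul_mem _ (Algebra.subset_adjoin (Set.mem_image_of_mem x hl)) _
  | algebraMap c => rw [AlgEquiv.commutes]; exact Subalgebra.algebraMap_mem _ _
  | add a b _ _ ha hb => rw [map_add]; exact add_mem ha hb
  | mul a b _ _ ha hb => rw [map_mul]; exact mul_mem ha hb

theorem oreStep_of (x : Fin N → R) (act : Torus K r →* (R ≃ₐ[K] R))
    (he : ∀ k : Fin N, ∃ f : Fin r → ℤ, IsEigenWith K act f (x k))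
    (T : Set (Fin N)) (ξ : Torus K r) (y : R)
    (hd : ∀ a ∈ Algebra.adjoin K (x '' T), y * a - act ξ a * y ∈ Algebra.adjoin K (x '' T)) :
    OreStep (Algebra.adjoin K (x '' T)) y (act ξ) := by
  refine ⟨act_mem x act he T ξ, ?_, hd⟩
  intro a ha
  have := act_mem x act he T ξ⁻¹ a ha
  rwa [map_inv] at this

theorem delta_stable (x : Fin N → R) (act : Torus K r →* (R ≃ₐ[K] R))
    (he : ∀ k : Fin N, ∃ f : Fin r → ℤ, IsEigenWith K act f (x k))
    (T : Set (Fin N)) (ξ : Torus K r) (y : R)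
    (hd : ∀ l ∈ T, y * x l - act ξ (x l) * y ∈ Algebra.adjoin K (x '' T)) (a : R)
    (ha : a ∈ Algebra.adjoin K (x '' T)) :
    y * a - act ξ a * y ∈ Algebra.adjoin K (x '' T) := by
  induction ha using Algebra.adjoin_induction with
  | mem t ht =>
    obtain ⟨l, hl, rfl⟩ := ht
    exact hd l hl
  | algebraMap c =>
    rw [AlgEquiv.commutes, ← Algebra.commutes, sub_self]
    exact zero_mem _
  | add a b _ _ ha hb =>
    have : y * (a + b) - act ξ (a + b) * y
        = (y * a - act ξ a * y) + (y * b - act ξ b * y) := by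
      rw [map_add]; noncomm_ring
    rw [this]; exact add_mem ha hb
  | mul a b ha' hb' ha hb =>
    have : y * (a * b) - act ξ (a * b) * y
        = (y * a - act ξ a * y) * b + act ξ a * (y * b - act ξ b * y) := by
      rw [map_mul]; noncomm_ring
    rw [this]
    exact add_mem (mul_mem ha hb') (mul_mem (act_mem x act he T ξ a ha') hb)

theorem MS_le_adjoin (x : Fin N → R) (L : List (Fin N)) (I : Set (Fin N)) (a : R)
    (ha : a ∈ MS K x L I) : a ∈ Algebra.adjoin K (x '' I) := by
  have : MS K x L I ≤ Subalgebra.toSubmodule (Algebra.adjoin K (x '' I)) := by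
    refine Submodule.span_le.2 ?_
    rintro _ ⟨m, hm, rfl⟩
    apply Subalgebra.list_prod_mem
    intro z hz
    obtain ⟨k, _, rfl⟩ := List.mem_map.1 hz
    by_cases hk : k ∈ I
    · exact pow_mem (Algebra.subset_adjoin (Set.mem_image_of_mem x hk)) _
    · rw [hm k hk, pow_zero]; exact one_mem _
  exact this ha

theorem finRange_lt : (List.finRange N).Pairwise (· < ·) := List.pairwise_lt_finRange N

theorem finRange_rev_gt : (List.finRange N).reverse.Pairwise (fun a b => b < a) := by
  rw [List.pairwise_reverse]
  exact List.pairwise_lt_finRange N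

theorem Rsub_MS_fwd (S : SymQNA K R N r) (k : Fin N) (a : R) (ha : a ∈ Rsub K S.x (k : ℕ)) :
    a ∈ MS K S.x (List.finRange N) {l | l < k} := by
  have := Rsub_le_MS (K := K) S.x (· < ·) (fun a => lt_irrefl a) (fun a b h => lt_asymm h)
    (List.finRange N) finRange_lt (List.mem_finRange) (Equiv.refl _)
    (fun k => Or.inl fun l hl => hl)
    (fun k : Fin N => ⟨S.act (S.h k), oreStep_of S.x S.act S.eigenvec {l : Fin N | (l : ℕ) < k} (S.h k) _
      (S.stable k)⟩) k k.2.le a ha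
  simpa [← Fin.lt_def] using this

theorem RsubRev_MS_fwd (S : SymQNA K R N r) (k : Fin N) (a : R)
    (ha : a ∈ RsubRev K S.x (k : ℕ)) :
    a ∈ MS K S.x (List.finRange N) {l | k < l} := by
  have hset : ∀ k : Fin N, Fin.revPerm '' {l : Fin N | (l : ℕ) < (k : ℕ)}
      = {l : Fin N | ((Fin.rev k : Fin N) : ℕ) < (l : ℕ)} := by
    intro k
    ext l
    constructor
    · rintro ⟨l, hl, rfl⟩
      have : (l : ℕ) < k := hl
      simp only [Fin.revPerm_apply, Set.mem_ofPred_eq, Fin.val_rev]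
      omega
    · intro hl
      refine ⟨Fin.rev l, ?_, by simp⟩
      simp only [Set.mem_ofPred_eq, Fin.val_rev] at hl ⊢
      omega
  have hR : ∀ k : Fin N, Rsub K (fun i => S.x (Fin.revPerm i)) (k : ℕ)
      = RsubRev K S.x ((Fin.rev k : Fin N) : ℕ) := by
    intro k
    unfold Rsub RsubRev
    rw [← hset k, Set.image_image]
  have := Rsub_le_MS (K := K) S.x (· < ·) (fun a => lt_irrefl a) (fun a b h => lt_asymm h)
    (List.finRange N) finRange_lt (List.mem_finRange) Fin.revPerm
    (fun k => Or.inr fun l hl => by simpa using hl)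
    (fun k : Fin N => ⟨S.act (S.hstar (Fin.rev k)), by
      rw [hR]
      exact oreStep_of S.x S.act S.eigenvec {l : Fin N | ((Fin.rev k : Fin N) : ℕ) < (l : ℕ)}
        (S.hstar (Fin.rev k)) _ (S.stableRev (Fin.rev k))⟩) (Fin.rev k) (Fin.rev k).2.le a
      (by rw [hR, Fin.rev_rev]; exact ha)
  rw [hset, Fin.rev_rev] at this
  simpa [← Fin.lt_def] using this

/-- The key commutation relation. -/
theorem comm_key (S : SymQNA K R N r) (l k : Fin N) (hlk : l < k) :
    (S.x k * S.x l - S.act (S.h k) (S.x l) * S.x k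
      ∈ Algebra.adjoin K (S.x '' {j | l < j ∧ j < k})) ∧
    (S.x l * S.x k - S.act (S.hstar l) (S.x k) * S.x l
      ∈ Algebra.adjoin K (S.x '' {j | l < j ∧ j < k})) := by
  set a := S.x k * S.x l - S.act (S.h k) (S.x l) * S.x k with ha
  set b := S.x l * S.x k - S.act (S.hstar l) (S.x k) * S.x l with hb
  have haM : a ∈ MS K S.x (List.finRange N) {j | j < k} :=
    Rsub_MS_fwd S k _ (S.stable k _ (Algebra.subset_adjoin ⟨l, hlk, rfl⟩))
  have hbM : b ∈ MS K S.x (List.finRange N) {j | l < j} :=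
    RsubRev_MS_fwd S l _ (S.stableRev l _ (Algebra.subset_adjoin ⟨k, hlk, rfl⟩))
  obtain ⟨ca, hca, hca'⟩ := (Finsupp.mem_span_image_iff_linearCombination K).1 haM
  obtain ⟨cb, hcb, hcb'⟩ := (Finsupp.mem_span_image_iff_linearCombination K).1 hbM
  obtain ⟨f, hf⟩ := S.eigenvec l
  obtain ⟨g, hg⟩ := S.eigenvec k
  set u : Kˣ := ∏ i, S.h k i ^ f i with hu
  set v : Kˣ := ∏ i, S.hstar l i ^ g i with hv
  have hua : a = S.x k * S.x l - (u : K) • (S.x l * S.x k) := by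
    rw [ha, hf (S.h k), smul_mul_assoc]
  have hvb : b = S.x l * S.x k - (v : K) • (S.x k * S.x l) := by
    rw [hb, hg (S.hstar l), smul_mul_assoc]
  have hrel : (v : K) • a + b = (1 - (v : K) * u) • (S.x l * S.x k) := by
    rw [hua, hvb, smul_sub, sub_smul, one_smul, mul_smul]
    abel
  set m0 : Fin N → ℕ := Function.update (Function.update 0 l 1) k 1 with hm0
  have hmon : lmon S.x (List.finRange N) m0 = S.x l * S.x k := by
    rw [hm0, lmon_update_right S.x (· < ·) (fun a => lt_irrefl a) k 1 _ _ _ _ finRange_lt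
      (List.mem_finRange k), lmon_update_right S.x (· < ·) (fun a => lt_irrefl a) l 1 0 rfl
      (fun _ _ => rfl) _ finRange_lt (List.mem_finRange l), lmon_eq_one _ _ 0 (fun _ _ => rfl)]
    · simp
    · rw [Function.update_of_ne hlk.ne']; rfl
    · intro j hj
      rw [Function.update_of_ne (hlk.trans hj).ne']; rfl
  have hm0k : m0 k = 1 := by simp [hm0]
  have hm0l : m0 l = 1 := by
    rw [hm0, Function.update_of_ne hlk.ne]; simp
  have hfin : (v : K) • ca + cb = Finsupp.single m0 (1 - (v : K) * u) := by
    have hinj : Function.Injective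
        (Finsupp.linearCombination K (lmon S.x (List.finRange N))) := S.pbw
    apply hinj
    rw [map_add, map_smul, hca', hcb', hrel, Finsupp.linearCombination_single, hmon]
  have hv0 : (v : K) ≠ 0 := v.ne_zero
  constructor
  · apply MS_le_adjoin S.x (List.finRange N)
    refine (Finsupp.mem_span_image_iff_linearCombination K).2 ⟨ca, ?_, hca'⟩
    intro m hm
    have hmk := hca hm
    intro j hj
    by_contra hmj
    have hjk : j < k := by
      by_contra h
      exact hmj (hmk j h)
    have hjl : ¬ l < j := fun h => hj ⟨h, hjk⟩
    have h1 : cb m = 0 := by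
      by_contra h
      exact hmj (hcb (by simpa using h) j hjl)
    have h2 := DFunLike.congr_fun hfin m
    rw [Finsupp.single_eq_of_ne] at h2
    · simp [h1] at h2
      simp at hm
      exact hm h2
    · rintro rfl
      have := hmk k (lt_irrefl k)
      omega
  · apply MS_le_adjoin S.x (List.finRange N)
    refine (Finsupp.mem_span_image_iff_linearCombination K).2 ⟨cb, ?_, hcb'⟩
    intro m hm
    have hml := hcb hm
    intro j hj
    by_contra hmj
    have hlj : l < j := by
      by_contra h
      exact hmj (hml j h)
    have hjk : ¬ j < k := fun h => hj ⟨hlj, h⟩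
    have h1 : ca m = 0 := by
      by_contra h
      exact hmj (hca (by simpa using h) j hjk)
    have h2 := DFunLike.congr_fun hfin m
    rw [Finsupp.single_eq_of_ne] at h2
    · simp [h1] at h2
      simp at hm
      exact hm h2
    · rintro rfl
      have := hml l (lt_irrefl l)
      omega

theorem xi_min {τ : Equiv.Perm (Fin N)} (hτ : InXi τ) (k : Fin N) (hk : ¬ XiCaseMax τ k) :
    ∀ l < k, τ k < τ l := by
  unfold XiCaseMax at hk
  push Not at hk
  obtain ⟨b, hb, hkb⟩ := hk
  intro l hl
  by_contra h
  obtain ⟨c, hc, hck⟩ := hτ (max l b) l b (le_max_left _ _) (le_max_right _ _) (τ k)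
    (not_lt.1 h) hkb
  have := τ.injective hck
  subst this
  exact absurd (max_lt hl hb) (not_lt.2 hc)

end Helpers

/-- **The presentations of a symmetric quantum nilpotent algebra associated to `τ ∈ Ξ_N`.**
Let `R` be a symmetric quantum nilpotent algebra of dimension `N` and `τ ∈ Ξ_N`.  Then
`R` has an iterated skew polynomial presentation with generators in the order
`x_{τ(1)}, …, x_{τ(N)}` satisfying the quantum nilpotent algebra axioms (a)–(c) with
respect to the same torus action, where at the `k`-th step the torus element is
`h''_{τ(k)} = h_{τ(k)}` if `τ(k) = max τ([1,k-1]) + 1`, and `h''_{τ(k)} = h*_{τ(k)}` if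
`τ(k) = min τ([1,k-1]) − 1` (with the corresponding eigenvalues `λ_{τ(k)}`, `λ*_{τ(k)}`). -/
theorem tau_presentation_of_symQNA
    {K : Type u} [Field K] {R : Type v} [Ring R] [Algebra K R] {N r : ℕ}
    (S : SymQNA K R N r) (τ : Equiv.Perm (Fin N)) (hτ : InXi τ) :
    ∃ Qτ : QNA K R N r,
      Qτ.x = (fun k => S.x (τ k)) ∧
      Qτ.act = S.act ∧
      (∀ k : Fin N, 0 < (k : ℕ) →
        (XiCaseMax τ k → Qτ.h k = S.h (τ k) ∧ Qτ.lam k = S.lam (τ k)) ∧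
        (¬ XiCaseMax τ k → Qτ.h k = S.hstar (τ k) ∧ Qτ.lam k = S.lamstar (τ k))) := by
  classical
  have hR : ∀ n : ℕ, Rsub K (fun i => S.x (τ i)) n
      = Algebra.adjoin K (S.x '' (τ '' {l | (l : ℕ) < n})) := by
    intro n
    unfold Rsub
    rw [Set.image_image]
  let h' : Fin N → Torus K r := fun k => if XiCaseMax τ k then S.h (τ k) else S.hstar (τ k)
  let lam' : Fin N → K := fun k => if XiCaseMax τ k then S.lam (τ k) else S.lamstar (τ k)
  have hstab : ∀ k : Fin N, ∀ a ∈ Rsub K (fun i => S.x (τ i)) (k : ℕ),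
      S.x (τ k) * a - S.act (h' k) a * S.x (τ k) ∈ Rsub K (fun i => S.x (τ i)) (k : ℕ) := by
    intro k
    rw [hR]
    apply delta_stable S.x S.act S.eigenvec
    rintro _ ⟨l, hl, rfl⟩
    have hlk : l < k := hl
    by_cases hk : XiCaseMax τ k
    · simp only [h', if_pos hk]
      refine Algebra.adjoin_mono (Set.image_mono ?_) (comm_key S (τ l) (τ k) (hk l hlk)).1
      rintro j ⟨h1, h2⟩
      obtain ⟨c, hc, rfl⟩ := hτ k l k hlk.le le_rfl j h1.le h2.le
      exact ⟨c, lt_of_le_of_ne hc (by rintro rfl; exact lt_irrefl _ h2), rfl⟩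
    · simp only [h', if_neg hk]
      refine Algebra.adjoin_mono (Set.image_mono ?_)
        (comm_key S (τ k) (τ l) (xi_min hτ k hk l hlk)).2
      rintro j ⟨h1, h2⟩
      obtain ⟨c, hc, rfl⟩ := hτ k k l le_rfl hlk.le j h1.le h2.le
      exact ⟨c, lt_of_le_of_ne hc (by rintro rfl; exact lt_irrefl _ h1), rfl⟩
  have hore : ∀ k : Fin N, ∃ σ, OreStep (Rsub K (fun i => S.x (τ i)) (k : ℕ)) (S.x (τ k)) σ := by
    intro k
    refine ⟨S.act (h' k), ?_⟩
    have := hstab k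
    rw [hR] at this ⊢
    exact oreStep_of S.x S.act S.eigenvec _ (h' k) _ this
  have hnt : Nontrivial R := ⟨⟨_, 0, S.pbw.ne_zero 0⟩⟩
  have hfree : ∀ k : Fin N, LinearIndependent (Rsub K (fun i => S.x (τ i)) (k : ℕ))
      (fun m : ℕ => S.x (τ k) ^ m) := by
    intro k
    by_cases hk : XiCaseMax τ k
    · refine powers_free S.x (· < ·) (fun a => lt_irrefl a) (fun a b h => lt_asymm h)
        (List.finRange N) finRange_lt List.mem_finRange S.pbw (τ '' {l | (l : ℕ) < k}) (τ k) ?_ _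
        (Rsub_le_MS S.x (· < ·) (fun a => lt_irrefl a) (fun a b h => lt_asymm h)
          (List.finRange N) finRange_lt List.mem_finRange τ ?_ hore k k.2.le)
      · rintro _ ⟨l, hl, rfl⟩
        exact hk l hl
      · intro k
        by_cases hk : XiCaseMax τ k
        · exact Or.inl hk
        · exact Or.inr (xi_min hτ k hk)
    · refine powers_free S.x (fun a b => b < a) (fun a => lt_irrefl a)
        (fun a b h => lt_asymm h)
        (List.finRange N).reverse finRange_rev_gt (by simp) S.pbwRev
        (τ '' {l | (l : ℕ) < k}) (τ k) ?_ _
        (Rsub_le_MS S.x (fun a b => b < a) (fun a => lt_irrefl a) (fun a b h => lt_asymm h)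
          (List.finRange N).reverse finRange_rev_gt (by simp) τ ?_ hore k k.2.le)
      · rintro _ ⟨l, hl, rfl⟩
        exact xi_min hτ k hk l hl
      · intro k
        by_cases hk : XiCaseMax τ k
        · exact Or.inr hk
        · exact Or.inl (xi_min hτ k hk)
  refine ⟨{ x := fun k => S.x (τ k), act := S.act, h := h', lam := lam',
            rational := S.rational
            gen := ?_
            pbw := pbw_of_free N _ hfree
            eigenvec := fun k => S.eigenvec (τ k)
            stable := hstab
            locnil := ?_
            hx := ?_
            lam_not_root := ?_ }, rfl, rfl, ?_⟩
  · rw [← S.gen]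
    congr 1
    exact τ.surjective.range_comp S.x
  · intro k a ha
    rw [hR] at ha
    by_cases hk : XiCaseMax τ k
    · have heq : skewDelta K S.act (fun i => S.x (τ i)) h' k
          = skewDelta K S.act S.x S.h (τ k) := by
        funext a
        simp only [skewDelta, h', if_pos hk]
      rw [heq]
      refine S.locnil (τ k) a (Algebra.adjoin_mono (Set.image_mono ?_) ha)
      rintro _ ⟨l, hl, rfl⟩
      exact hk l hl
    · have heq : skewDelta K S.act (fun i => S.x (τ i)) h' k
          = skewDelta K S.act S.x S.hstar (τ k) := by
        funext a
        simp only [skewDelta, h', if_neg hk]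
      rw [heq]
      refine S.locnilRev (τ k) a (Algebra.adjoin_mono (Set.image_mono ?_) ha)
      rintro _ ⟨l, hl, rfl⟩
      exact xi_min hτ k hk l hl
  · intro k
    by_cases hk : XiCaseMax τ k
    · simp only [h', lam', if_pos hk]
      exact S.hx (τ k)
    · simp only [h', lam', if_neg hk]
      exact S.hxstar (τ k)
  · intro k
    by_cases hk : XiCaseMax τ k
    · simp only [lam', if_pos hk]
      exact S.lam_not_root (τ k)
    · simp only [lam', if_neg hk]
      exact S.lamstar_not_root (τ k)
  · intro k _
    exact ⟨fun hk => ⟨if_pos hk, if_pos hk⟩, fun hk => ⟨if_neg hk, if_neg hk⟩⟩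
end
end
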